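/- arXiv:1903.10399 — 2 statements merged into one kernel-verified Lean document; each statement's English description precedes it below -/
import Mathlib

section
/- (Convergence rate of the meta-algorithm with approximate gradients.) Under bounded inputs and Lipschitz loss with R, L > 0, let h̄_T be the output of Algorithm 2 run with step size γ = (√2 ‖ĥ‖/(L R)) · ( T (1 + 4(log n + 1)/n) )^{−1/2} for a fixed nonzero ĥ ∈ ℝ^d. Then E[ Ê_n(h̄_T) ] − Ê_n(ĥ) ≤ ‖ĥ‖ L R √( 2 (1 + 4(log n + 1)/n) / T ) + 2 R² L² (log n + 1)/(λ n), where Ê_n(h) = E_{μ∼ρ} E_{Z_n∼μ^n} L_{Z_n}(h) and the outer expectation is over the i.i.d. sampling of the T training tasks and datasets. -/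
open MeasureTheory Real
open scoped InnerProductSpace

noncomputable section

abbrev Vec (d : ℕ) := EuclideanSpace ℝ (Fin d)
abbrev Pt (d : ℕ) := Vec d × ℝ

/-- Empirical risk of `w` on the dataset `S`. -/
def empRisk {d n : ℕ} (ℓ : ℝ → ℝ → ℝ) (S : Fin n → Pt d) (w : Vec d) : ℝ :=
  (n : ℝ)⁻¹ * ∑ k, ℓ (⟪(S k).1, w⟫_ℝ) ((S k).2)

/-- Biased regularized empirical risk. -/
def regRisk {d n : ℕ} (ℓ : ℝ → ℝ → ℝ) (lam : ℝ) (S : Fin n → Pt d)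
    (h w : Vec d) : ℝ :=
  empRisk ℓ S w + lam / 2 * ‖w - h‖ ^ 2

/-- True risk of `w` under the task distribution `μ`. -/
def trueRisk {d : ℕ} (ℓ : ℝ → ℝ → ℝ) (μ : Measure (Pt d)) (w : Vec d) : ℝ :=
  ∫ z, ℓ (⟪z.1, w⟫_ℝ) (z.2) ∂μ

/-- `u` is a subgradient of `f : ℝ → ℝ` at `a`. -/
def IsSubgradAt (f : ℝ → ℝ) (u a : ℝ) : Prop :=
  ∀ b, f a + u * (b - a) ≤ f b

/-- The per-step budget of the comparison argument, in units of `L² R² / λ`. -/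
def stepBudget (i : ℕ) : ℝ := if i < 5 then 1 else 2 / ((i : ℝ) + 1)

lemma sum_stepBudget_le_of_le {n : ℕ} (hn : 5 ≤ n) :
    ∑ i ∈ Finset.range n, stepBudget i ≤ 2 * (Real.log n + 1) := by
  induction n, hn using Nat.le_induction with
  | base =>
    have h5 : (3 / 2 : ℝ) ≤ Real.log 5 := by
      have h3 : Real.exp 3 ≤ 5 ^ 2 := by
        have h1 : Real.exp 3 = Real.exp 1 ^ 3 := by rw [← Real.exp_nat_mul]; norm_num
        have h2 := Real.exp_one_lt_d9
        rw [h1]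
        calc Real.exp 1 ^ 3 ≤ (2.7182818286 : ℝ) ^ 3 := by gcongr
          _ ≤ 5 ^ 2 := by norm_num
      have := (Real.le_log_iff_exp_le (by norm_num)).2 h3
      rw [Real.log_pow] at this
      push_cast at this
      linarith
    simp only [Finset.sum_range_succ, Finset.sum_range_zero, stepBudget]
    norm_num
    linarith
  | succ n hn ih =>
    have hn0 : (0 : ℝ) < n := by exact_mod_cast (by omega : 0 < n)
    rw [Finset.sum_range_succ, stepBudget, if_neg (by omega)]
    have hlog : 1 / ((n : ℝ) + 1) ≤ Real.log ((n : ℝ) + 1) - Real.log n := by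
      rw [← Real.log_div (by positivity) (by positivity)]
      have := Real.one_sub_inv_le_log_of_pos (x := ((n : ℝ) + 1) / n) (by positivity)
      refine le_trans (le_of_eq ?_) this
      field_simp
      ring
    push_cast
    have : 2 / ((n : ℝ) + 1) = 2 * (1 / ((n : ℝ) + 1)) := by ring
    linarith

lemma sum_stepBudget_le {n : ℕ} (hn : 1 ≤ n) :
    ∑ i ∈ Finset.range n, stepBudget i ≤ 2 * (Real.log n + 1) := by
  rcases le_or_gt 5 n with h | h
  · exact sum_stepBudget_le_of_le h
  · have h2 : (0.69 : ℝ) ≤ Real.log 2 := by linarith [Real.log_two_gt_d9]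
    have h3 : Real.log 2 ≤ Real.log 3 := Real.log_le_log (by norm_num) (by norm_num)
    have h4 : Real.log 4 = 2 * Real.log 2 := by
      rw [show (4 : ℝ) = 2 ^ 2 by norm_num, Real.log_pow]; norm_num
    interval_cases n <;>
    · simp only [Finset.sum_range_succ, Finset.sum_range_zero, stepBudget]
      norm_num
      try linarith

section Deterministic

variable {E : Type*} [NormedAddCommGroup E] [InnerProductSpace ℝ E]

lemma norm_sq_sgd_step (w x : E) {k : ℝ} (hk : k ≠ 0) (c s : ℝ) :
    ‖k⁻¹ • (c • w - s • x)‖ ^ 2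
      = (c ^ 2 * ‖w‖ ^ 2 - 2 * c * s * ⟪x, w⟫_ℝ + s ^ 2 * ‖x‖ ^ 2) / k ^ 2 := by
  rw [norm_smul, mul_pow, norm_sub_sq_real, norm_smul, norm_smul, real_inner_smul_left,
    real_inner_smul_right, real_inner_comm, mul_pow, mul_pow]
  simp only [Real.norm_eq_abs, sq_abs]
  field_simp

/-- One step of the comparison while the comparator rests at the bias. -/
lemma sgd_step_comparison_rest {L R lam k u : ℝ} (hL : 0 < L) (hlam : 0 < lam)
    (φ : ℝ → ℝ) (hφ : ∀ a b, |φ a - φ b| ≤ L * |a - b|) {w x : E} (hx : ‖x‖ ≤ R)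
    (hu : |u| ≤ L) (hk : 2 ≤ k ∨ (k = 1 ∧ w = 0)) :
    φ 0 - φ (⟪x, w⟫_ℝ) + u * ⟪x, w⟫_ℝ
      + lam * k * ‖k⁻¹ • ((k - 1) • w - (u / lam) • x)‖ ^ 2 - lam * (k - 1) * ‖w‖ ^ 2
      ≤ L ^ 2 * R ^ 2 / lam := by
  have hk0 : 0 < k := by rcases hk with h | ⟨h, -⟩ <;> linarith
  rw [norm_sq_sgd_step w x hk0.ne']
  have hX : u ^ 2 * ‖x‖ ^ 2 ≤ L ^ 2 * R ^ 2 := by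
    have h1 : u ^ 2 ≤ L ^ 2 := sq_le_sq' (abs_le.1 hu).1 (abs_le.1 hu).2
    have h2 : ‖x‖ ^ 2 ≤ R ^ 2 := by gcongr
    gcongr
  rcases hk with hk | ⟨rfl, rfl⟩
  · set b := ⟪x, w⟫_ℝ with hb
    have hbw : |b| ≤ R * ‖w‖ := (abs_real_inner_le_norm x w).trans (by gcongr)
    have h1 : φ 0 - φ b ≤ L * |b| := by
      have := (abs_le.1 (hφ 0 b)).2
      simpa using this
    have h2 : -(u * b) ≤ L * |b| := by
      have : |u * b| ≤ L * |b| := by rw [abs_mul]; gcongr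
      linarith [neg_le_of_abs_le this]
    have h3 : 2 * (L * R) * ‖w‖ - lam * ‖w‖ ^ 2 ≤ L ^ 2 * R ^ 2 / lam := by
      rw [le_div_iff₀ hlam]
      nlinarith [sq_nonneg (L * R - lam * ‖w‖)]
    have hid : φ 0 - φ b + u * b
        + lam * k * (((k - 1) ^ 2 * ‖w‖ ^ 2 - 2 * (k - 1) * (u / lam) * b
          + (u / lam) ^ 2 * ‖x‖ ^ 2) / k ^ 2) - lam * (k - 1) * ‖w‖ ^ 2
        = (φ 0 - φ b) + (1 - 2 / k) * (-(u * b)) - (1 - 1 / k) * (lam * ‖w‖ ^ 2)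
          + (1 / k) * (u ^ 2 * ‖x‖ ^ 2 / lam) := by
      field_simp
      ring
    rw [hid]
    have hk2 : 0 ≤ 1 - 2 / k := by
      rw [sub_nonneg, div_le_one hk0]; exact hk
    have hk1 : 0 ≤ 1 - 1 / k := by
      rw [sub_nonneg, div_le_one hk0]; linarith
    have h4 : (1 - 2 / k) * (-(u * b)) ≤ (1 - 2 / k) * (L * |b|) := by gcongr
    have h5 : (1 - 1 / k) * (2 * (L * |b|)) ≤ (1 - 1 / k) * (2 * (L * (R * ‖w‖))) := by gcongr
    have h6 : (1 - 1 / k) * (2 * (L * R) * ‖w‖ - lam * ‖w‖ ^ 2)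
        ≤ (1 - 1 / k) * (L ^ 2 * R ^ 2 / lam) := by gcongr
    have h7 : (1 / k) * (u ^ 2 * ‖x‖ ^ 2 / lam) ≤ (1 / k) * (L ^ 2 * R ^ 2 / lam) := by gcongr
    have h8 : L * |b| + (1 - 2 / k) * (L * |b|) = (1 - 1 / k) * (2 * (L * |b|)) := by ring
    linarith
  · have : lam * (u / lam) ^ 2 * ‖x‖ ^ 2 = u ^ 2 * ‖x‖ ^ 2 / lam := by field_simp
    simp
    rw [← mul_assoc, this]
    gcongr

set_option maxHeartbeats 1000000 in
/-- One step of the comparison with a comparator that moves along a proximal slope `m`. -/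
lemma sgd_step_comparison_prox {L R lam k u m τ : ℝ} (hR : 0 < R) (hlam : 0 < lam)
    (hk : 6 ≤ k) (hτ : τ = 2 * R ^ 2 / (lam * (k - 2)))
    (φ : ℝ → ℝ) (hφ : ∀ a b, |φ a - φ b| ≤ L * |a - b|) {w v x : E} (hx : ‖x‖ ≤ R)
    (hu : |u| ≤ L) (hsubu : IsSubgradAt φ u ⟪x, w⟫_ℝ)
    (hsubm : IsSubgradAt φ m (⟪x, v⟫_ℝ - τ * m)) :
    φ (⟪x, v⟫_ℝ) + lam / 2 * ‖v‖ ^ 2 - φ (⟪x, w⟫_ℝ) + u * ⟪x, w⟫_ℝ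
      + lam / 2 * (k * ‖k⁻¹ • ((k - 1) • w - (u / lam) • x)‖ ^ 2 - (k - 1) * ‖w‖ ^ 2)
      + lam / 2 * (k * ‖k⁻¹ • ((k - 1) • w - (u / lam) • x)
          - k⁻¹ • ((k - 2) • v - (2 * m / lam) • x)‖ ^ 2 - (k - 1) * ‖w - v‖ ^ 2)
      + lam / 2 * (‖k⁻¹ • ((k - 2) • v - (2 * m / lam) • x)‖ ^ 2 - ‖v‖ ^ 2)
      ≤ L ^ 2 * R ^ 2 / lam * (2 / k) := by
  obtain ⟨e, rfl⟩ : ∃ e, w = v + e := ⟨w - v, by abel⟩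
  have hk0 : 0 < k := by linarith
  have hk2 : 0 < k - 2 := by linarith
  have hdiff : k⁻¹ • ((k - 1) • (v + e) - (u / lam) • x)
      - k⁻¹ • ((k - 2) • v - (2 * m / lam) • x)
      = k⁻¹ • ((1 : ℝ) • (v + (k - 1) • e) - ((u - 2 * m) / lam) • x) := by
    rw [← smul_sub]
    congr 1
    module
  rw [hdiff, norm_sq_sgd_step _ x hk0.ne', norm_sq_sgd_step _ x hk0.ne',
    norm_sq_sgd_step _ x hk0.ne', add_sub_cancel_left, norm_add_sq_real, norm_add_sq_real,
    norm_smul, inner_add_right, inner_add_right, real_inner_smul_right, real_inner_smul_right,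
    Real.norm_eq_abs, mul_pow, sq_abs]
  rw [inner_add_right] at hsubu
  have hX2 : ‖x‖ ^ 2 ≤ R ^ 2 := by gcongr
  have hX0 : 0 ≤ ‖x‖ ^ 2 := by positivity
  have hCS : ⟪x, v⟫_ℝ ^ 2 ≤ ‖x‖ ^ 2 * ‖v‖ ^ 2 := by
    rw [← mul_pow]
    exact sq_le_sq' (by linarith [neg_le_of_abs_le (abs_real_inner_le_norm x v)])
      (real_inner_le_norm x v)
  have hE0 : 0 ≤ ‖e‖ ^ 2 := by positivity
  set a := ⟪x, v⟫_ℝ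
  set d := ⟪x, e⟫_ℝ
  set c := ⟪v, e⟫_ℝ
  set V := ‖v‖ ^ 2
  set D := ‖e‖ ^ 2
  set X := ‖x‖ ^ 2
  have hτ0 : 0 < τ := by rw [hτ]; positivity
  -- consequences of the two subgradient inequalities
  have s1 : φ (a - τ * m) + m * (d + τ * m) ≤ φ (a + d) := by
    have := hsubm (a + d); convert this using 2; ring
  have s2 : φ a - L * (τ * |m|) ≤ φ (a - τ * m) := by
    have := (abs_le.1 (hφ a (a - τ * m))).2
    rw [show a - (a - τ * m) = τ * m by ring, abs_mul, abs_of_pos hτ0] at this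
    linarith
  have s3 : 0 ≤ (u - m) * (d + τ * m) := by
    have h1 := hsubu (a - τ * m)
    have h2 : (u - m) * (d + τ * m)
        = m * (a - τ * m - (a + d)) - u * (a - τ * m - (a + d)) := by ring
    have h3 : m * (d + τ * m) = -(m * (a - τ * m - (a + d))) := by ring
    linarith
  have hu2 : u ^ 2 ≤ L ^ 2 := sq_le_sq' (abs_le.1 hu).1 (abs_le.1 hu).2
  have hid : φ a + lam / 2 * V - φ (a + d) + u * (a + d)
      + lam / 2 * (k * (((k - 1) ^ 2 * (V + 2 * c + D) - 2 * (k - 1) * (u / lam) * (a + d)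
          + (u / lam) ^ 2 * X) / k ^ 2) - (k - 1) * (V + 2 * c + D))
      + lam / 2 * (k * ((1 ^ 2 * (V + 2 * ((k - 1) * c) + (k - 1) ^ 2 * D)
          - 2 * 1 * ((u - 2 * m) / lam) * (a + (k - 1) * d)
          + ((u - 2 * m) / lam) ^ 2 * X) / k ^ 2) - (k - 1) * D)
      + lam / 2 * (((k - 2) ^ 2 * V - 2 * (k - 2) * (2 * m / lam) * a
          + (2 * m / lam) ^ 2 * X) / k ^ 2 - V)
      = φ a - φ (a + d) + m * d - (1 - 2 / k) * ((u - m) * d)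
        - lam * (1 - 1 / k) * D
        + 1 / k * (((u - m) ^ 2 + m ^ 2) * X / lam)
        + 1 / k ^ 2 * (4 * (m * a) - lam * (k - 2) * V + 2 * m ^ 2 * X / lam) := by
    field_simp
    ring
  rw [hid]
  have t1 : 4 * (m * a) - lam * (k - 2) * V ≤ 4 * m ^ 2 * X / (lam * (k - 2)) := by
    rw [le_div_iff₀ (by positivity)]
    have hV0 : 0 ≤ V := by positivity
    generalize lam * (k - 2) = q
    have h1 : V * ((4 * (m * a) - q * V) * q) ≤ V * (4 * m ^ 2 * X) := by
      have h2 : m ^ 2 * a ^ 2 ≤ m ^ 2 * (X * V) := by gcongr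
      have h3 := sq_nonneg (q * V - 2 * m * a)
      linarith
    rcases hV0.eq_or_lt with hV | hV
    · have ha : a = 0 := by
        rw [← hV, mul_zero] at hCS
        exact pow_eq_zero_iff two_ne_zero |>.1 (le_antisymm hCS (sq_nonneg a))
      rw [ha, ← hV]
      simp only [mul_zero, sub_zero, zero_mul]
      positivity
    · exact le_of_mul_le_mul_left h1 hV
  have t2 : 1 / k ^ 2 * (4 * (m * a) - lam * (k - 2) * V + 2 * m ^ 2 * X / lam)
      ≤ 1 / k * (2 * m ^ 2 / (k - 2) * R ^ 2 / lam) := by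
    calc _ ≤ 1 / k ^ 2 * (4 * m ^ 2 * X / (lam * (k - 2)) + 2 * m ^ 2 * X / lam) := by gcongr
      _ = 1 / k * (2 * m ^ 2 / (k - 2) * X / lam) := by field_simp; ring
      _ ≤ _ := by gcongr
  have t3 : 1 / k * (((u - m) ^ 2 + m ^ 2) * X / lam)
      ≤ 1 / k * (((u - m) ^ 2 + m ^ 2) * R ^ 2 / lam) := by gcongr
  have t4 : 0 ≤ lam * (1 - 1 / k) * D := by
    have : 0 ≤ 1 - 1 / k := by rw [sub_nonneg, div_le_one hk0]; linarith
    positivity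
  have t5 : -((1 - 2 / k) * ((u - m) * d)) ≤ (1 - 2 / k) * ((u - m) * (τ * m)) := by
    have h0 : 0 ≤ 1 - 2 / k := by rw [sub_nonneg, div_le_one hk0]; linarith
    have h1 := mul_nonneg h0 s3
    have h2 : (1 - 2 / k) * ((u - m) * (d + τ * m))
        = (1 - 2 / k) * ((u - m) * d) + (1 - 2 / k) * ((u - m) * (τ * m)) := by ring
    linarith
  have hτ' : (1 - 2 / k) * τ = 1 / k * (2 * R ^ 2 / lam) := by rw [hτ]; field_simp
  have hτ'' : τ = 1 / k * (2 * k / (k - 2) * (R ^ 2 / lam)) := by rw [hτ]; field_simp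
  have hquad : 2 * k / (k - 2) * (L * |m|) - 2 * k / (k - 2) * m ^ 2 + 2 * m ^ 2 / (k - 2)
      ≤ L ^ 2 := by
    have : 2 * k / (k - 2) * (L * |m|) - 2 * k / (k - 2) * m ^ 2 + 2 * m ^ 2 / (k - 2)
        = (2 * k * (L * |m|) - 2 * (k - 1) * m ^ 2) / (k - 2) := by field_simp; ring
    rw [this, div_le_iff₀ hk2, ← sq_abs m]
    have hA : (2 * (k - 1)) * (2 * k * (L * |m|) - 2 * (k - 1) * |m| ^ 2)
        ≤ (2 * (k - 1)) * (L ^ 2 * (k - 2)) := by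
      nlinarith [sq_nonneg (2 * (k - 1) * |m| - k * L), mul_nonneg (sq_nonneg L)
        (by nlinarith : (0 : ℝ) ≤ k ^ 2 - 6 * k + 4)]
    exact le_of_mul_le_mul_left hA (by linarith)
  have main : L * (τ * |m|) - τ * m ^ 2 + (1 - 2 / k) * ((u - m) * (τ * m))
      + 1 / k * (((u - m) ^ 2 + m ^ 2) * R ^ 2 / lam)
      + 1 / k * (2 * m ^ 2 / (k - 2) * R ^ 2 / lam)
      = 1 / k * (R ^ 2 / lam) * (u ^ 2 + (2 * k / (k - 2) * (L * |m|)
        - 2 * k / (k - 2) * m ^ 2 + 2 * m ^ 2 / (k - 2))) := by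
    have : (1 - 2 / k) * ((u - m) * (τ * m)) = 1 / k * (2 * R ^ 2 / lam) * ((u - m) * m) := by
      rw [← hτ']; ring
    rw [this]
    rw [hτ'']
    ring
  have fin : 1 / k * (R ^ 2 / lam) * (u ^ 2 + (2 * k / (k - 2) * (L * |m|)
        - 2 * k / (k - 2) * m ^ 2 + 2 * m ^ 2 / (k - 2)))
      ≤ 1 / k * (R ^ 2 / lam) * (L ^ 2 + L ^ 2) := by gcongr
  have fin' : 1 / k * (R ^ 2 / lam) * (L ^ 2 + L ^ 2) = L ^ 2 * R ^ 2 / lam * (2 / k) := by ring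
  have s4 : m * (d + τ * m) = m * d + τ * m ^ 2 := by ring
  linarith

end Deterministic

section Comparison

variable {E : Type*} [NormedAddCommGroup E] [InnerProductSpace ℝ E]

lemma IsSubgradAt.abs_le {f : ℝ → ℝ} {u a L : ℝ} (hu : IsSubgradAt f u a)
    (hf : ∀ a b, |f a - f b| ≤ L * |a - b|) : |u| ≤ L := by
  rw [_root_.abs_le]
  have h1 := hu (a + 1)
  have h2 := hu (a - 1)
  have h3 := (_root_.abs_le.1 (hf (a + 1) a)).2
  have h4 := (_root_.abs_le.1 (hf (a - 1) a)).2
  simp only [add_sub_cancel_left, abs_one, mul_one, sub_sub_cancel_left, abs_neg] at h1 h2 h3 h4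
  constructor <;> linarith

/-- Comparison of the SGD displacements `ω` with the non-anticipating displacements `v`: the
linearised losses along `ω` dominate the regularised losses along `v` up to a logarithmic term. -/
lemma sgd_comparison {L R lam : ℝ} (hR : 0 < R) (hL : 0 < L) (hlam : 0 < lam) (n : ℕ)
    (φ : ℕ → ℝ → ℝ) (x ω v : ℕ → E) (u m : ℕ → ℝ)
    (hφ : ∀ i < n, ∀ a b, |φ i a - φ i b| ≤ L * |a - b|)
    (hx : ∀ i < n, ‖x i‖ ≤ R)
    (hω0 : ω 0 = 0)
    (hω : ∀ i < n, ω (i + 1) = ((i : ℝ) + 1)⁻¹ • ((i : ℝ) • ω i - (u i / lam) • x i))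
    (hu : ∀ i < n, IsSubgradAt (φ i) (u i) ⟪x i, ω i⟫_ℝ)
    (hv0 : ∀ i ≤ 5, v i = 0)
    (hv : ∀ i < n, 5 ≤ i →
      v (i + 1) = ((i : ℝ) + 1)⁻¹ • (((i : ℝ) - 1) • v i - (2 * m i / lam) • x i))
    (hm : ∀ i < n, 5 ≤ i → IsSubgradAt (φ i) (m i)
      (⟪x i, v i⟫_ℝ - 2 * R ^ 2 / (lam * ((i : ℝ) - 1)) * m i)) :
    ∑ i ∈ Finset.range n, (φ i ⟪x i, v i⟫_ℝ + lam / 2 * ‖v i‖ ^ 2 - φ i ⟪x i, ω i⟫_ℝ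
        + u i * ⟪x i, ω i⟫_ℝ)
      + lam / 2 * (n * ‖ω n‖ ^ 2 + n * ‖ω n - v n‖ ^ 2 + ‖v n‖ ^ 2)
      ≤ L ^ 2 * R ^ 2 / lam * ∑ i ∈ Finset.range n, stepBudget i := by
  induction n with
  | zero => simp [hω0, hv0 0 (by omega)]
  | succ n ih =>
    have ih := ih (fun i hi => hφ i (by omega)) (fun i hi => hx i (by omega))
      (fun i hi => hω i (by omega)) (fun i hi => hu i (by omega)) (fun i hi => hv i (by omega))
      (fun i hi => hm i (by omega))
    rw [Finset.sum_range_succ, Finset.sum_range_succ, mul_add]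
    have hlt := Nat.lt_succ_self n
    have huL := (hu n hlt).abs_le (hφ n hlt)
    rcases lt_or_ge n 5 with h5 | h5
    · have hk : (2 : ℝ) ≤ n + 1 ∨ ((n : ℝ) + 1 = 1 ∧ ω n = 0) := by
        rcases Nat.eq_zero_or_pos n with rfl | hn
        · right; simp [hω0]
        · left
          have : (1 : ℝ) ≤ n := by exact_mod_cast hn
          linarith
      have step := sgd_step_comparison_rest hL hlam (φ n) (hφ n hlt) (hx n hlt) huL hk
      rw [add_sub_cancel_right, ← hω n hlt] at step
      rw [hv0 n (by omega)] at ih ⊢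
      rw [hv0 (n + 1) (by omega), stepBudget, if_pos h5]
      simp only [sub_zero, norm_zero, inner_zero_right] at ih ⊢
      push_cast
      linarith
    · have h5' : (5 : ℝ) ≤ n := by exact_mod_cast h5
      have step := sgd_step_comparison_prox (k := (n : ℝ) + 1) hR hlam (by linarith) rfl (φ n)
        (hφ n hlt) (w := ω n) (v := v n) (m := m n) (hx n hlt) huL (hu n hlt)
        (by convert hm n hlt h5 using 4; ring)
      rw [add_sub_cancel_right, show (n : ℝ) + 1 - 2 = n - 1 by ring, ← hω n hlt,
        ← hv n hlt h5] at step
      rw [stepBudget, if_neg (by omega)]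
      push_cast
      linarith

end Comparison

/-- The non-anticipating comparator displacements: at rest for the first steps, then moving along
the slopes `m i`. -/
def proxPath {d n : ℕ} (lam : ℝ) (m : ℕ → ℝ → ℝ → ℝ) (h : Vec d) (S : Fin n → Pt d) : ℕ → Vec d
  | 0 => 0
  | i + 1 =>
    if hi : 5 ≤ i ∧ i < n then
      ((i : ℝ) + 1)⁻¹ • (((i : ℝ) - 1) • proxPath lam m h S i
        - (2 * m i ⟪(S ⟨i, hi.2⟩).1, h + proxPath lam m h S i⟫_ℝ (S ⟨i, hi.2⟩).2 / lam) •
          (S ⟨i, hi.2⟩).1)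
    else 0

lemma proxPath_eq_zero {d n : ℕ} (lam : ℝ) (m : ℕ → ℝ → ℝ → ℝ) (h : Vec d) (S : Fin n → Pt d)
    {i : ℕ} (hi : i ≤ 5) : proxPath lam m h S i = 0 := by
  cases i with
  | zero => rfl
  | succ i => rw [proxPath, dif_neg (by omega)]

section Pointwise

variable {d n : ℕ} {ℓ : ℝ → ℝ → ℝ} {lam : ℝ} {S : Fin n → Pt d} {h : Vec d} {w : ℕ → Vec d}
  {u : Fin n → ℝ}

lemma sgd_displacement_succ (hlam : 0 < lam)
    (hrec : ∀ k : Fin n, w (k.1 + 2) = w (k.1 + 1) - (((k.1 + 1 : ℕ) : ℝ) * lam)⁻¹ •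
          (u k • (S k).1 + lam • (w (k.1 + 1) - h))) (k : Fin n) :
    w (k.1 + 2) - h = ((k.1 : ℝ) + 1)⁻¹ •
      ((k.1 : ℝ) • (w (k.1 + 1) - h) - (u k / lam) • (S k).1) := by
  rw [hrec k]
  have hk : ((k.1 : ℝ) + 1) ≠ 0 := by positivity
  push_cast
  match_scalars <;> field_simp <;> ring

lemma sgd_output_eq (hn : 1 ≤ n) (hlam : 0 < lam)
    (hrec : ∀ k : Fin n, w (k.1 + 2) = w (k.1 + 1) - (((k.1 + 1 : ℕ) : ℝ) * lam)⁻¹ •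
          (u k • (S k).1 + lam • (w (k.1 + 1) - h))) :
    (-lam) • (w (n + 1) - h) = (n : ℝ)⁻¹ • ∑ k, u k • (S k).1 := by
  have key : ∀ i, i ≤ n → (i : ℝ) • (-lam) • (w (i + 1) - h)
      = ∑ k ∈ Finset.range i, if hk : k < n then u ⟨k, hk⟩ • (S ⟨k, hk⟩).1 else 0 := by
    intro i
    induction i with
    | zero => simp
    | succ i ih =>
      intro hi
      have hi' : i < n := hi
      rw [Finset.sum_range_succ, ← ih (by omega), dif_pos hi',
        sgd_displacement_succ hlam hrec ⟨i, hi'⟩]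
      have hk : ((i : ℝ) + 1) ≠ 0 := by positivity
      push_cast
      match_scalars <;> field_simp
  have hn0 : (n : ℝ) ≠ 0 := by positivity
  have h1 := key n le_rfl
  rw [Finset.sum_range] at h1
  simp only [Fin.is_lt, dif_pos, Fin.eta] at h1
  rw [← h1, smul_smul, inv_mul_cancel₀ hn0, one_smul]

lemma neg_norm_sq_div_le {E : Type*} [NormedAddCommGroup E] [InnerProductSpace ℝ E]
    (hlam : 0 < lam) (g v : E) :
    -(‖g‖ ^ 2 / (2 * lam)) ≤ ⟪g, v⟫_ℝ + lam / 2 * ‖v‖ ^ 2 := by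
  have h1 := (abs_le.1 (abs_real_inner_le_norm g v)).1
  have h2 : 0 ≤ (‖g‖ - lam * ‖v‖) ^ 2 / (2 * lam) := by positivity
  have h3 : (‖g‖ - lam * ‖v‖) ^ 2 / (2 * lam)
      = ‖g‖ ^ 2 / (2 * lam) - ‖g‖ * ‖v‖ + lam / 2 * ‖v‖ ^ 2 := by field_simp; ring
  linarith

/-- Weak duality: the linearisations at the SGD iterates bound the regularised risk with any
other bias from below. -/
lemma regRisk_ge_linearization (hn : 1 ≤ n) (hlam : 0 < lam)
    (hsub : ∀ k : Fin n, IsSubgradAt (fun a => ℓ a (S k).2) (u k) ⟪(S k).1, w (k.1 + 1)⟫_ℝ)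
    (hrec : ∀ k : Fin n, w (k.1 + 2) = w (k.1 + 1) - (((k.1 + 1 : ℕ) : ℝ) * lam)⁻¹ •
          (u k • (S k).1 + lam • (w (k.1 + 1) - h))) (h' z : Vec d) :
    (n : ℝ)⁻¹ * ∑ k : Fin n, (ℓ ⟪(S k).1, w (k.1 + 1)⟫_ℝ (S k).2
        - u k * ⟪(S k).1, w (k.1 + 1) - h⟫_ℝ)
      + ⟪(-lam) • (w (n + 1) - h), h' - h⟫_ℝ - lam / 2 * ‖w (n + 1) - h‖ ^ 2
      ≤ regRisk ℓ lam S h' z := by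
  have hg := sgd_output_eq hn hlam hrec
  have h0 : (n : ℝ)⁻¹ * ∑ k : Fin n, (ℓ ⟪(S k).1, w (k.1 + 1)⟫_ℝ (S k).2
        - u k * ⟪(S k).1, w (k.1 + 1) - h⟫_ℝ) + ⟪(-lam) • (w (n + 1) - h), z - h⟫_ℝ
      ≤ empRisk ℓ S z := by
    rw [hg, real_inner_smul_left, sum_inner, ← mul_add, ← Finset.sum_add_distrib, empRisk]
    gcongr with k
    have := hsub k ⟪(S k).1, z⟫_ℝ
    simp only [real_inner_smul_left, inner_sub_right] at this ⊢
    linarith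
  have h1 := neg_norm_sq_div_le hlam ((-lam) • (w (n + 1) - h)) (z - h')
  have h2 : ‖(-lam) • (w (n + 1) - h)‖ ^ 2 / (2 * lam) = lam / 2 * ‖w (n + 1) - h‖ ^ 2 := by
    rw [norm_smul, mul_pow, Real.norm_eq_abs, sq_abs]
    field_simp
  have h3 : ⟪(-lam) • (w (n + 1) - h), z - h⟫_ℝ = ⟪(-lam) • (w (n + 1) - h), z - h'⟫_ℝ
      + ⟪(-lam) • (w (n + 1) - h), h' - h⟫_ℝ := by
    rw [← inner_add_right, sub_add_sub_cancel]
  rw [regRisk]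
  linarith

lemma norm_sgd_output_le {L R : ℝ} (hn : 1 ≤ n) (hlam : 0 < lam)
    (hLip : ∀ k : Fin n, ∀ a b, |ℓ a (S k).2 - ℓ b (S k).2| ≤ L * |a - b|)
    (hx : ∀ k : Fin n, ‖(S k).1‖ ≤ R)
    (hsub : ∀ k : Fin n, IsSubgradAt (fun a => ℓ a (S k).2) (u k) ⟪(S k).1, w (k.1 + 1)⟫_ℝ)
    (hrec : ∀ k : Fin n, w (k.1 + 2) = w (k.1 + 1) - (((k.1 + 1 : ℕ) : ℝ) * lam)⁻¹ •
          (u k • (S k).1 + lam • (w (k.1 + 1) - h))) :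
    ‖(-lam) • (w (n + 1) - h)‖ ≤ L * R := by
  have hn0 : (0 : ℝ) < n := by exact_mod_cast hn
  rw [sgd_output_eq hn hlam hrec, norm_smul, norm_inv, Real.norm_natCast,
    inv_mul_le_iff₀ hn0]
  refine (norm_sum_le _ _).trans ?_
  have : ∀ k ∈ Finset.univ, ‖u k • (S k).1‖ ≤ L * R := fun k _ => by
    have h1 := (hsub k).abs_le (hLip k)
    rw [norm_smul, Real.norm_eq_abs]
    exact mul_le_mul h1 (hx k) (norm_nonneg _) ((abs_nonneg _).trans h1)
  refine (Finset.sum_le_sum this).trans ?_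
  simp

/-- The approximate meta-gradient is, up to a logarithmic error, a subgradient of the
meta-objective once the latter is replaced by the regularised losses of the comparator. -/
lemma regRisk_ge_proxPath {L R : ℝ} (hn : 1 ≤ n) (hR : 0 < R) (hL : 0 < L) (hlam : 0 < lam)
    (hLip : ∀ k : Fin n, ∀ a b, |ℓ a (S k).2 - ℓ b (S k).2| ≤ L * |a - b|)
    (hx : ∀ k : Fin n, ‖(S k).1‖ ≤ R) (hw1 : w 1 = h)
    (hsub : ∀ k : Fin n, IsSubgradAt (fun a => ℓ a (S k).2) (u k) ⟪(S k).1, w (k.1 + 1)⟫_ℝ)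
    (hrec : ∀ k : Fin n, w (k.1 + 2) = w (k.1 + 1) - (((k.1 + 1 : ℕ) : ℝ) * lam)⁻¹ •
          (u k • (S k).1 + lam • (w (k.1 + 1) - h)))
    {m : ℕ → ℝ → ℝ → ℝ}
    (hm : ∀ i, 5 ≤ i → ∀ c y, IsSubgradAt (fun a => ℓ a y) (m i c y)
      (c - 2 * R ^ 2 / (lam * ((i : ℝ) - 1)) * m i c y)) (h' z : Vec d) :
    (n : ℝ)⁻¹ * ∑ k : Fin n, (ℓ ⟪(S k).1, h + proxPath lam m h S k⟫_ℝ (S k).2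
        + lam / 2 * ‖proxPath lam m h S k‖ ^ 2)
      + ⟪(-lam) • (w (n + 1) - h), h' - h⟫_ℝ
      - 2 * R ^ 2 * L ^ 2 * (Real.log n + 1) / (lam * n)
      ≤ regRisk ℓ lam S h' z := by
  have hn0 : (0 : ℝ) < n := by exact_mod_cast hn
  have hdual := regRisk_ge_linearization (ℓ := ℓ) hn hlam hsub hrec h' z
  set v := proxPath lam m h S with hvdef
  let p : ℕ → Pt d := fun i => if hi : i < n then S ⟨i, hi⟩ else 0
  have hp : ∀ k : Fin n, p k = S k := fun k => by simp [p]
  let u₁ : ℕ → ℝ := fun i => if hi : i < n then u ⟨i, hi⟩ else 0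
  have hu₁ : ∀ k : Fin n, u₁ k = u k := fun k => by simp [u₁]
  have hcomp := sgd_comparison hR hL hlam n (fun i t => ℓ (⟪(p i).1, h⟫_ℝ + t) (p i).2)
    (fun i => (p i).1) (fun i => w (i + 1) - h) v u₁
    (fun i => m i ⟪(p i).1, h + v i⟫_ℝ (p i).2)
    (fun i hi a b => by
      have := hLip ⟨i, hi⟩ (⟪(p i).1, h⟫_ℝ + a) (⟪(p i).1, h⟫_ℝ + b)
      rw [← hp ⟨i, hi⟩] at this
      simpa using this)
    (fun i hi => by rw [hp ⟨i, hi⟩]; exact hx _)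
    (by simp [hw1])
    (fun i hi => by
      have := sgd_displacement_succ hlam hrec ⟨i, hi⟩
      rw [hp ⟨i, hi⟩, hu₁ ⟨i, hi⟩]
      exact this)
    (fun i hi b => by
      have := hsub ⟨i, hi⟩ (⟪(p i).1, h⟫_ℝ + b)
      rw [← hp ⟨i, hi⟩, ← hu₁ ⟨i, hi⟩] at this
      simp only [inner_sub_right, add_sub_cancel] at this ⊢
      refine le_trans (le_of_eq ?_) this
      ring)
    (fun i hi => proxPath_eq_zero lam m h S hi)
    (fun i hi h5 => by
      rw [hvdef, proxPath, dif_pos ⟨h5, hi⟩, ← hp ⟨i, hi⟩])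
    (fun i hi h5 b => by
      have := hm i h5 ⟪(p i).1, h + v i⟫_ℝ (p i).2 (⟪(p i).1, h⟫_ℝ + b)
      refine le_trans (le_of_eq ?_) this
      simp only [inner_add_right]
      congr 1
      · congr 1; ring
      · ring)
  have hbud := sum_stepBudget_le hn
  have hle : L ^ 2 * R ^ 2 / lam * ∑ i ∈ Finset.range n, stepBudget i
      ≤ L ^ 2 * R ^ 2 / lam * (2 * (Real.log n + 1)) := by gcongr
  rw [Finset.sum_range] at hcomp
  simp only [hp, hu₁] at hcomp
  have hsum : ∑ k : Fin n, (ℓ ⟪(S k).1, h + v k⟫_ℝ (S k).2 + lam / 2 * ‖v k‖ ^ 2)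
      - ∑ k : Fin n, (ℓ ⟪(S k).1, w (k.1 + 1)⟫_ℝ (S k).2
        - u k * ⟪(S k).1, w (k.1 + 1) - h⟫_ℝ) + n * (lam / 2 * ‖w (n + 1) - h‖ ^ 2)
      ≤ L ^ 2 * R ^ 2 / lam * (2 * (Real.log n + 1)) := by
    have h1 : 0 ≤ lam / 2 * (n * ‖w (n + 1) - h - v n‖ ^ 2 + ‖v n‖ ^ 2) := by positivity
    rw [← Finset.sum_sub_distrib]
    have h2 : ∀ k : Fin n, ℓ ⟪(S k).1, h + v k⟫_ℝ (S k).2 + lam / 2 * ‖v k‖ ^ 2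
        - (ℓ ⟪(S k).1, w (k.1 + 1)⟫_ℝ (S k).2 - u k * ⟪(S k).1, w (k.1 + 1) - h⟫_ℝ)
        = ℓ (⟪(S k).1, h⟫_ℝ + ⟪(S k).1, v k⟫_ℝ) (S k).2 + lam / 2 * ‖v k‖ ^ 2
          - ℓ (⟪(S k).1, h⟫_ℝ + ⟪(S k).1, w (k.1 + 1) - h⟫_ℝ) (S k).2
          + u k * ⟪(S k).1, w (k.1 + 1) - h⟫_ℝ := fun k => by
      rw [← inner_add_right, ← inner_add_right, add_sub_cancel]
      ring
    simp only [h2]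
    linarith
  have hdiv : (n : ℝ)⁻¹ * (∑ k : Fin n, (ℓ ⟪(S k).1, h + v k⟫_ℝ (S k).2 + lam / 2 * ‖v k‖ ^ 2)
      - ∑ k : Fin n, (ℓ ⟪(S k).1, w (k.1 + 1)⟫_ℝ (S k).2
        - u k * ⟪(S k).1, w (k.1 + 1) - h⟫_ℝ) + n * (lam / 2 * ‖w (n + 1) - h‖ ^ 2))
      ≤ (n : ℝ)⁻¹ * (L ^ 2 * R ^ 2 / lam * (2 * (Real.log n + 1))) := by gcongr
  have e1 : (n : ℝ)⁻¹ * (L ^ 2 * R ^ 2 / lam * (2 * (Real.log n + 1)))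
      = 2 * R ^ 2 * L ^ 2 * (Real.log n + 1) / (lam * n) := by field_simp
  have e2 : (n : ℝ)⁻¹ * (n * (lam / 2 * ‖w (n + 1) - h‖ ^ 2))
      = lam / 2 * ‖w (n + 1) - h‖ ^ 2 := by field_simp
  rw [e1, mul_add, mul_sub, e2] at hdiv
  linarith

end Pointwise

section Subgradient

lemma IsSubgradAt.mono {f : ℝ → ℝ} {u v a b : ℝ} (hu : IsSubgradAt f u a) (hv : IsSubgradAt f v b)
    (hab : a < b) : u ≤ v := by
  have h1 := hu b
  have h2 := hv a
  have h3 : u * (b - a) ≤ v * (b - a) := by linarith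
  exact le_of_mul_le_mul_right h3 (by linarith)

lemma convexOn_of_isSubgradAt {f u : ℝ → ℝ} (hu : ∀ a, IsSubgradAt f (u a) a) :
    ConvexOn ℝ Set.univ f := by
  refine ⟨convex_univ, fun a _ b _ α β hα hβ hαβ => ?_⟩
  simp only [smul_eq_mul]
  set c := α * a + β * b with hc
  have h1 := mul_le_mul_of_nonneg_left (hu c a) hα
  have h2 := mul_le_mul_of_nonneg_left (hu c b) hβ
  have h3 : α * (f c + u c * (a - c)) + β * (f c + u c * (b - c))
      = (α + β) * f c + u c * (α * a + β * b - (α + β) * c) := by ring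
  rw [hαβ, one_mul, one_mul, ← hc, sub_self, mul_zero, add_zero] at h3
  linarith

lemma continuous_of_isSubgradAt {f u : ℝ → ℝ} (hu : ∀ a, IsSubgradAt f (u a) a) :
    Continuous f :=
  continuousOn_univ.1 ((convexOn_of_isSubgradAt hu).continuousOn isOpen_univ)

/-- Existence of the proximal point, expressed through its slope. -/
lemma exists_prox_slope {f u : ℝ → ℝ} (hu : ∀ a, IsSubgradAt f (u a) a) {τ : ℝ} (hτ : 0 < τ)
    (c : ℝ) : ∃ m, IsSubgradAt f m (c - τ * m) := by
  have hcont : Continuous fun s => f s + (s - c) ^ 2 / (2 * τ) := by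
    have := continuous_of_isSubgradAt hu
    fun_prop
  obtain ⟨p, hp⟩ := hcont.exists_forall_le' c (by
    refine Filter.mem_of_superset
      (isCompact_closedBall c (2 * τ * |u c|)).compl_mem_cocompact fun s hs => ?_
    simp only [Set.mem_compl_iff, Metric.mem_closedBall, Real.dist_eq, not_le] at hs
    have h1 := hu c s
    have h2 : -(u c * (s - c)) ≤ |u c| * |s - c| := by
      rw [← abs_mul]; exact neg_le_abs _
    have h3 : |u c| * |s - c| ≤ (s - c) ^ 2 / (2 * τ) := by
      rw [le_div_iff₀ (by positivity), ← sq_abs (s - c)]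
      nlinarith [abs_nonneg (s - c)]
    simp only [Set.mem_ofPred_eq, sub_self]
    rw [zero_pow two_ne_zero, zero_div]
    linarith)
  refine ⟨(c - p) / τ, fun b => ?_⟩
  have hpe : c - τ * ((c - p) / τ) = p := by field_simp; ring
  rw [hpe]
  have hconv := convexOn_of_isSubgradAt hu
  set A := f b - f p - (c - p) / τ * (b - p) with hA
  set B := (b - p) ^ 2 / (2 * τ) with hB
  have hB0 : 0 ≤ B := by positivity
  have key : ∀ t : ℝ, 0 < t → t ≤ 1 → 0 ≤ A + t * B := fun t ht ht1 => by
    have h1 := hp ((1 - t) * p + t * b)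
    have h2 := hconv.2 (Set.mem_univ p) (Set.mem_univ b) (by linarith : 0 ≤ 1 - t) ht.le (by ring)
    simp only [smul_eq_mul] at h2
    have h3 : ((1 - t) * p + t * b - c) ^ 2 / (2 * τ)
        = (p - c) ^ 2 / (2 * τ) + t * (t * B - (c - p) / τ * (b - p)) := by
      rw [hB]; field_simp; ring
    have h4 : 0 ≤ t * (A + t * B) := by rw [hA]; linarith
    exact nonneg_of_mul_nonneg_right h4 ht
  have hA0 : 0 ≤ A := by
    by_contra! hneg
    have h1 := key (-A / (B - A)) (div_pos (by linarith) (by linarith))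
      ((div_le_one (by linarith)).2 (by linarith))
    have h2 : A + -A / (B - A) * B = -(A ^ 2 / (B - A)) := by
      have : B - A ≠ 0 := by linarith
      field_simp
      ring
    have h3 : 0 < A ^ 2 / (B - A) := div_pos (sq_pos_of_neg hneg) (by linarith)
    linarith
  rw [hA] at hA0
  linarith

variable {ℓ u : ℝ → ℝ → ℝ}

/-- The proximal slope can be chosen jointly measurably. -/
lemma exists_measurable_prox_slope (hum : ∀ a, Measurable (u a))
    (hu : ∀ a y, IsSubgradAt (fun s => ℓ s y) (u a y) a) {τ : ℝ} (hτ : 0 < τ) :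
    ∃ m : ℝ → ℝ → ℝ, Measurable (Function.uncurry m) ∧
      ∀ c y, IsSubgradAt (fun s => ℓ s y) (m c y) (c - τ * m c y) := by
  choose m hm using fun c y => exists_prox_slope (fun a => hu a y) hτ c
  refine ⟨m, ?_, hm⟩
  have hP : Measurable fun q : ℝ × ℝ => q.1 - τ * m q.1 q.2 := by
    refine measurable_of_Iic fun t => ?_
    have : (fun q : ℝ × ℝ => q.1 - τ * m q.1 q.2) ⁻¹' Set.Iic t
        = ⋂ r : ℚ, {q : ℝ × ℝ | t < r → 0 ≤ u r q.2 + (r - q.1) / τ} := by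
      ext ⟨c, y⟩
      simp only [Set.mem_preimage, Set.mem_Iic, Set.mem_iInter, Set.mem_ofPred_eq]
      constructor
      · intro hle r hr
        have h1 := (hm c y).mono (hu r y) (lt_of_le_of_lt hle hr)
        have h2 : -((r - c) / τ) ≤ m c y := by
          rw [← neg_div, div_le_iff₀ hτ]; linarith
        linarith
      · intro hall
        by_contra! hlt
        obtain ⟨r, hr1, hr2⟩ := exists_rat_btwn hlt
        have h1 := (hu r y).mono (hm c y) hr2
        have h2 : m c y < -((r - c) / τ) := by
          rw [← neg_div, lt_div_iff₀ hτ]; linarith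
        linarith [hall r hr1]
    rw [this]
    refine MeasurableSet.iInter fun r => ?_
    by_cases hr : t < r
    · simp only [hr, true_imp_iff]
      have := hum r
      exact measurableSet_le measurable_const (by fun_prop)
    · simp [hr]
  have : Function.uncurry m = fun q : ℝ × ℝ => (q.1 - (q.1 - τ * m q.1 q.2)) / τ := by
    ext ⟨c, y⟩
    simp only [Function.uncurry_apply_pair]
    field_simp
    ring
  rw [this]
  exact (measurable_fst.sub hP).div_const τ

lemma sum_subgrad_le_and_le {f v : ℝ → ℝ} (hv : ∀ a, IsSubgradAt f (v a) a) (δ : ℝ) (N : ℕ) :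
    ∑ i ∈ Finset.range N, δ * v (i * δ) ≤ f (N * δ) - f 0 ∧
      f (N * δ) - f 0 ≤ ∑ i ∈ Finset.range N, δ * v (i * δ) + δ * (v (N * δ) - v 0) := by
  induction N with
  | zero => simp
  | succ N ih =>
    rw [Finset.sum_range_succ]
    have h1 := hv (N * δ) ((N + 1 : ℕ) * δ)
    have h2 := hv ((N + 1 : ℕ) * δ) (N * δ)
    push_cast at h1 h2 ⊢
    rw [show ((N : ℝ) + 1) * δ - N * δ = δ by ring] at h1
    rw [show (N : ℝ) * δ - (N + 1) * δ = -δ by ring] at h2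
    constructor <;> linarith [ih.1, ih.2]

lemma measurable_loss_sub (hum : ∀ a, Measurable (u a))
    (hu : ∀ a y, IsSubgradAt (fun s => ℓ s y) (u a y) a) (a : ℝ) :
    Measurable fun y => ℓ a y - ℓ 0 y := by
  refine measurable_of_tendsto_metrizable
    (f := fun (N : ℕ) y => ∑ i ∈ Finset.range (N + 1), a / (N + 1) * u (i * (a / (N + 1))) y)
    (fun N => Finset.measurable_fun_sum _ fun i _ => (hum _).const_mul _) ?_
  rw [tendsto_pi_nhds]
  intro y
  have hb : ∀ N : ℕ, ((N + 1 : ℕ) : ℝ) * (a / (N + 1)) = a := fun N => by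
    push_cast; field_simp
  have hlim : Filter.Tendsto (fun N : ℕ => a / ((N : ℝ) + 1)) Filter.atTop (nhds 0) := by
    have := (tendsto_one_div_add_atTop_nhds_zero_nat (𝕜 := ℝ)).const_mul a
    simpa [div_eq_mul_inv] using this
  refine tendsto_of_tendsto_of_tendsto_of_le_of_le
    (g := fun N : ℕ => ℓ a y - ℓ 0 y - a / ((N : ℝ) + 1) * (u a y - u 0 y))
    (h := fun _ => ℓ a y - ℓ 0 y) ?_ tendsto_const_nhds (fun N => ?_) (fun N => ?_)
  · simpa using (hlim.mul_const (u a y - u 0 y)).const_sub (ℓ a y - ℓ 0 y)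
  · have := (sum_subgrad_le_and_le (fun a => hu a y) (a / (N + 1)) (N + 1)).2
    rw [hb] at this
    simp only
    linarith
  · have := (sum_subgrad_le_and_le (fun a => hu a y) (a / (N + 1)) (N + 1)).1
    rw [hb] at this
    exact this

lemma measurable_uncurry_loss_sub (hum : ∀ a, Measurable (u a))
    (hu : ∀ a y, IsSubgradAt (fun s => ℓ s y) (u a y) a) :
    Measurable (Function.uncurry fun a y => ℓ a y - ℓ 0 y) :=
  measurable_uncurry_of_continuous_of_measurable
    (fun y => (continuous_of_isSubgradAt fun a => hu a y).sub continuous_const)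
    (measurable_loss_sub hum hu)

end Subgradient

section Dataset

variable {d n : ℕ} {g : ℝ → ℝ → ℝ} {lam L R : ℝ}

lemma measurable_inner_loss (hgm : Measurable (Function.uncurry g)) (k : Fin n)
    {v : (Fin n → Pt d) → Vec d} (hv : Measurable v) :
    Measurable fun S : Fin n → Pt d => g ⟪(S k).1, v S⟫_ℝ (S k).2 := by
  have h1 : Measurable fun S : Fin n → Pt d => (S k).1 := (measurable_pi_apply k).fst
  have h2 : Measurable fun S : Fin n → Pt d => (S k).2 := (measurable_pi_apply k).snd
  exact hgm.comp ((h1.inner (𝕜 := ℝ) hv).prodMk h2)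

lemma measurable_regRisk (hgm : Measurable (Function.uncurry g)) (h z : Vec d) :
    Measurable fun S : Fin n → Pt d => regRisk g lam S h z :=
  ((Finset.measurable_fun_sum _ fun k _ =>
    measurable_inner_loss hgm k measurable_const).const_mul _).add_const _

lemma continuous_regRisk (hgc : ∀ y, Continuous fun a => g a y) (S : Fin n → Pt d) (h : Vec d) :
    Continuous fun z => regRisk g lam S h z := by
  unfold regRisk empRisk
  have : ∀ k, Continuous fun z : Vec d => g ⟪(S k).1, z⟫_ℝ (S k).2 := fun k =>
    (hgc _).comp (by fun_prop)
  fun_prop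

/-- A data point with bounded input whose loss is normalised and Lipschitz. -/
def IsGoodPt (g : ℝ → ℝ → ℝ) (L R : ℝ) (p : Pt d) : Prop :=
  ‖p.1‖ ≤ R ∧ g 0 p.2 = 0 ∧ ∀ a b, |g a p.2 - g b p.2| ≤ L * |a - b|

lemma IsGoodPt.abs_loss_le {p : Pt d} (hp : IsGoodPt g L R p) (hL : 0 < L) (z : Vec d) :
    |g ⟪p.1, z⟫_ℝ p.2| ≤ L * R * ‖z‖ := by
  have h1 := hp.2.2 ⟪p.1, z⟫_ℝ 0
  rw [hp.2.1, sub_zero, sub_zero] at h1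
  have h2 : |⟪p.1, z⟫_ℝ| ≤ R * ‖z‖ :=
    (abs_real_inner_le_norm _ _).trans (by have := hp.1; gcongr)
  calc _ ≤ L * |⟪p.1, z⟫_ℝ| := h1
    _ ≤ L * (R * ‖z‖) := by gcongr
    _ = _ := by ring

lemma abs_empRisk_le {S : Fin n → Pt d} (hn : 1 ≤ n) (hL : 0 < L)
    (hS : ∀ k, IsGoodPt g L R (S k)) (z : Vec d) : |empRisk g S z| ≤ L * R * ‖z‖ := by
  have hn0 : (0 : ℝ) < n := by exact_mod_cast hn
  rw [empRisk, abs_mul, abs_inv, Nat.abs_cast, inv_mul_le_iff₀ hn0]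
  refine (Finset.abs_sum_le_sum_abs _ _).trans ?_
  refine (Finset.sum_le_sum fun k _ => (hS k).abs_loss_le hL z).trans ?_
  simp

lemma regRisk_ge {S : Fin n → Pt d} (hn : 1 ≤ n) (hR : 0 < R) (hL : 0 < L) (hlam : 0 < lam)
    (hS : ∀ k, IsGoodPt g L R (S k)) (h z : Vec d) :
    -(L * R * ‖h‖ + (L * R) ^ 2 / (2 * lam)) ≤ regRisk g lam S h z := by
  have h1 := (abs_le.1 (abs_empRisk_le hn hL hS z)).1
  have h2 : L * R * ‖z‖ ≤ L * R * (‖h‖ + ‖z - h‖) := by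
    gcongr
    calc ‖z‖ = ‖h + (z - h)‖ := by rw [add_sub_cancel]
      _ ≤ _ := norm_add_le _ _
  have h3 : 0 ≤ (L * R - lam * ‖z - h‖) ^ 2 / (2 * lam) := by positivity
  have h4 : (L * R - lam * ‖z - h‖) ^ 2 / (2 * lam)
      = (L * R) ^ 2 / (2 * lam) - L * R * ‖z - h‖ + lam / 2 * ‖z - h‖ ^ 2 := by field_simp; ring
  rw [regRisk]
  linarith

lemma bddBelow_regRisk {S : Fin n → Pt d} (hn : 1 ≤ n) (hR : 0 < R) (hL : 0 < L)
    (hlam : 0 < lam) (hS : ∀ k, IsGoodPt g L R (S k)) (h : Vec d) :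
    BddBelow (Set.range fun z => regRisk g lam S h z) :=
  ⟨_, by rintro _ ⟨z, rfl⟩; exact regRisk_ge hn hR hL hlam hS h z⟩

lemma abs_iInf_regRisk_le {S : Fin n → Pt d} (hn : 1 ≤ n) (hR : 0 < R) (hL : 0 < L)
    (hlam : 0 < lam) (hS : ∀ k, IsGoodPt g L R (S k)) (h : Vec d) :
    |⨅ z, regRisk g lam S h z| ≤ L * R * ‖h‖ + (L * R) ^ 2 / (2 * lam) := by
  rw [abs_le]
  refine ⟨le_ciInf fun z => regRisk_ge hn hR hL hlam hS h z, ?_⟩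
  refine (ciInf_le (bddBelow_regRisk hn hR hL hlam hS h) h).trans ?_
  have h1 := (abs_le.1 (abs_empRisk_le hn hL hS h)).2
  have h2 : 0 ≤ (L * R) ^ 2 / (2 * lam) := by positivity
  rw [regRisk, sub_self, norm_zero]
  linarith

lemma ae_pi_forall {Z : Type*} [MeasurableSpace Z] {μ : Measure Z} [IsProbabilityMeasure μ]
    {P : Z → Prop} (hP : ∀ᵐ z ∂μ, P z) :
    ∀ᵐ S ∂(Measure.pi fun _ : Fin n => μ), ∀ k, P (S k) :=
  ae_all_iff.2 fun k =>
    (measurePreserving_eval (fun _ : Fin n => μ) k).quasiMeasurePreserving.ae hP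

lemma integrable_iInf_regRisk (hn : 1 ≤ n) (hR : 0 < R) (hL : 0 < L) (hlam : 0 < lam)
    (hgm : Measurable (Function.uncurry g)) (hgc : ∀ y, Continuous fun a => g a y)
    {μ : Measure (Pt d)} [IsProbabilityMeasure μ] (hgood : ∀ᵐ p ∂μ, IsGoodPt g L R p)
    (h : Vec d) :
    Integrable (fun S => ⨅ z, regRisk g lam S h z) (Measure.pi fun _ : Fin n => μ) := by
  refine Integrable.of_bound (C := L * R * ‖h‖ + (L * R) ^ 2 / (2 * lam)) ?_ ?_
  · refine AEMeasurable.aestronglyMeasurable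
      ⟨fun S => ⨅ q : ℕ, regRisk g lam S h (TopologicalSpace.denseSeq (Vec d) q),
        Measurable.iInf fun q => measurable_regRisk hgm h _, ?_⟩
    filter_upwards [ae_pi_forall (n := n) hgood] with S hS
    have hbdd := bddBelow_regRisk hn hR hL hlam hS h
    have hbdd' : BddBelow (Set.range fun q : ℕ =>
        regRisk g lam S h (TopologicalSpace.denseSeq (Vec d) q)) :=
      hbdd.mono (by rintro _ ⟨q, rfl⟩; exact ⟨_, rfl⟩)
    refine le_antisymm (le_ciInf fun q => ciInf_le hbdd _) (le_ciInf fun z => ?_)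
    exact isClosed_property (TopologicalSpace.denseRange_denseSeq (Vec d))
      (isClosed_le continuous_const (continuous_regRisk hgc S h)) (fun q => ciInf_le hbdd' q) z
  · filter_upwards [ae_pi_forall (n := n) hgood] with S hS
    exact abs_iInf_regRisk_le hn hR hL hlam hS h

lemma integrable_loss (hL : 0 < L) (hgm : Measurable (Function.uncurry g))
    {μ : Measure (Pt d)} [IsProbabilityMeasure μ] (hgood : ∀ᵐ p ∂μ, IsGoodPt g L R p)
    (z : Vec d) : Integrable (fun p : Pt d => g ⟪p.1, z⟫_ℝ p.2) μ := by
  refine Integrable.of_bound (C := L * R * ‖z‖) ?_ ?_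
  · have : Measurable fun p : Pt d => (⟪p.1, z⟫_ℝ, p.2) := by fun_prop
    exact (hgm.comp this).aestronglyMeasurable
  · filter_upwards [hgood] with p hp using hp.abs_loss_le hL z

lemma integral_iInf_regRisk_le (hn : 1 ≤ n) (hR : 0 < R) (hL : 0 < L) (hlam : 0 < lam)
    (hgm : Measurable (Function.uncurry g)) (hgc : ∀ y, Continuous fun a => g a y)
    {μ : Measure (Pt d)} [IsProbabilityMeasure μ] (hgood : ∀ᵐ p ∂μ, IsGoodPt g L R p)
    (h v : Vec d) :
    ∫ S, (⨅ z, regRisk g lam S h z) ∂(Measure.pi fun _ : Fin n => μ)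
      ≤ ∫ p, (g ⟪p.1, h + v⟫_ℝ p.2 + lam / 2 * ‖v‖ ^ 2) ∂μ := by
  have hn0 : (n : ℝ) ≠ 0 := by positivity
  have hmp := fun k => measurePreserving_eval (fun _ : Fin n => μ) k
  have hi := integrable_loss hL hgm hgood (h + v)
  have hik : ∀ k : Fin n, Integrable (fun S : Fin n → Pt d => g ⟪(S k).1, h + v⟫_ℝ (S k).2)
      (Measure.pi fun _ : Fin n => μ) := fun k => (hmp k).integrable_comp_of_integrable hi
  have hsum : Integrable (fun S : Fin n → Pt d => empRisk g S (h + v))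
      (Measure.pi fun _ : Fin n => μ) :=
    (integrable_finsetSum _ fun k _ => hik k).const_mul _
  calc _ ≤ ∫ S, regRisk g lam S h (h + v) ∂(Measure.pi fun _ : Fin n => μ) := by
        refine integral_mono_ae (integrable_iInf_regRisk hn hR hL hlam hgm hgc hgood h)
          (hsum.add (integrable_const _)) ?_
        filter_upwards [ae_pi_forall (n := n) hgood] with S hS
        exact ciInf_le (bddBelow_regRisk hn hR hL hlam hS h) _
    _ = _ := by
        simp only [regRisk, add_sub_cancel_left]
        rw [integral_add hsum (integrable_const _), integral_add hi (integrable_const _)]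
        simp only [empRisk, integral_const_mul, integral_const, probReal_univ, one_smul]
        rw [integral_finsetSum _ fun k _ => hik k]
        have : ∀ k : Fin n, ∫ S, g ⟪(S k).1, h + v⟫_ℝ (S k).2 ∂(Measure.pi fun _ : Fin n => μ)
            = ∫ p, g ⟪p.1, h + v⟫_ℝ p.2 ∂μ := fun k => by
          have := integral_map (hmp k).measurable.aemeasurable
            (f := fun p : Pt d => g ⟪p.1, h + v⟫_ℝ p.2)
            (by rw [(hmp k).map_eq]; exact hi.aestronglyMeasurable)
          rw [(hmp k).map_eq] at this
          exact this.symm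
        simp only [this, Finset.sum_const, Finset.card_univ, Fintype.card_fin, nsmul_eq_mul]
        field_simp

/-- Integrating out a coordinate on which a plugged-in quantity does not depend. -/
lemma le_integral_of_update_invariant {Z V : Type*} [MeasurableSpace Z] {μ : Measure Z}
    [IsProbabilityMeasure μ] (f : Z → V → ℝ) (v : (Fin n → Z) → V) (k : Fin n)
    (hv : ∀ S z, v (Function.update S k z) = v S) {c : ℝ} (hc : ∀ w, c ≤ ∫ z, f z w ∂μ)
    (hint : Integrable (fun S => f (S k) (v S)) (Measure.pi fun _ : Fin n => μ)) :
    c ≤ ∫ S, f (S k) (v S) ∂(Measure.pi fun _ : Fin n => μ) := by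
  obtain _ | m := n
  · exact k.elim0
  have hmp := (measurePreserving_piFinSuccAbove (fun _ : Fin (m + 1) => μ) k).symm
  rw [← hmp.integral_comp']
  have hint' := hmp.integrable_comp_of_integrable hint
  refine le_of_le_of_eq ?_ (integral_prod_symm _ hint').symm
  obtain ⟨z₀⟩ : Nonempty Z := nonempty_of_isProbabilityMeasure μ
  have key : ∀ S' : Fin m → Z, c ≤ ∫ z, f ((k.insertNth z S' : Fin (m + 1) → Z) k)
      (v (k.insertNth z S' : Fin (m + 1) → Z)) ∂μ := fun S' => by
    refine (hc (v (k.insertNth z₀ S'))).trans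
      (le_of_eq (integral_congr_ae (ae_of_all _ fun z => ?_)))
    have := hv (k.insertNth z₀ S') z
    rw [Fin.update_insertNth] at this
    simp only [Fin.insertNth_apply_same, this]
  calc c = ∫ _ : Fin m → Z, c ∂(Measure.pi fun _ : Fin m => μ) := by simp
    _ ≤ _ := integral_mono (integrable_const _) hint'.integral_prod_right key

end Dataset

section Task

variable {d n : ℕ} {g : ℝ → ℝ → ℝ} {lam L R : ℝ} {m : ℕ → ℝ → ℝ → ℝ} {h : Vec d}

lemma measurable_proxPath (hm : ∀ i, Measurable (Function.uncurry (m i))) (i : ℕ) :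
    Measurable fun S : Fin n → Pt d => proxPath lam m h S i := by
  induction i with
  | zero => exact measurable_const
  | succ i ih =>
    by_cases hi : 5 ≤ i ∧ i < n
    · simp only [proxPath, dif_pos hi]
      have h1 : Measurable fun S : Fin n → Pt d => (S ⟨i, hi.2⟩).1 := (measurable_pi_apply _).fst
      have h2 := measurable_inner_loss (hm i) ⟨i, hi.2⟩ (ih.const_add h)
      fun_prop
    · simp only [proxPath, dif_neg hi]
      exact measurable_const

lemma proxPath_update (S : Fin n → Pt d) (k : Fin n) (p : Pt d) {i : ℕ} (hi : i ≤ k) :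
    proxPath lam m h (Function.update S k p) i = proxPath lam m h S i := by
  induction i with
  | zero => rfl
  | succ i ih =>
    have hne : ∀ hin : i < n, (⟨i, hin⟩ : Fin n) ≠ k := fun hin heq => by
      rw [← heq] at hi
      exact absurd hi (by simp)
    simp only [proxPath, ih (by omega)]
    split_ifs with h5
    · rw [Function.update_of_ne (hne h5.2)]
    · rfl

lemma norm_proxPath_le (hR : 0 < R) (hL : 0 < L) (hlam : 0 < lam) {S : Fin n → Pt d}
    (hS : ∀ k, IsGoodPt g L R (S k))
    (hm : ∀ i, 5 ≤ i → ∀ c y, IsSubgradAt (fun a => g a y) (m i c y)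
      (c - 2 * R ^ 2 / (lam * ((i : ℝ) - 1)) * m i c y)) (i : ℕ) :
    ‖proxPath lam m h S i‖ ≤ L * R / lam := by
  have hpos : 0 ≤ L * R / lam := by positivity
  induction i with
  | zero => simpa [proxPath] using hpos
  | succ i ih =>
    rw [proxPath]
    split_ifs with hi
    · have hi5 : (5 : ℝ) ≤ i := by exact_mod_cast hi.1
      have hmL := (hm i hi.1 ⟪(S ⟨i, hi.2⟩).1, h + proxPath lam m h S i⟫_ℝ
        (S ⟨i, hi.2⟩).2).abs_le (hS ⟨i, hi.2⟩).2.2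
      rw [norm_smul, norm_inv, Real.norm_of_nonneg (by positivity), inv_mul_le_iff₀ (by positivity)]
      refine (norm_sub_le _ _).trans ?_
      rw [norm_smul, norm_smul, Real.norm_of_nonneg (by linarith), Real.norm_eq_abs, abs_div,
        abs_mul, abs_two, abs_of_pos hlam]
      calc _ ≤ ((i : ℝ) - 1) * (L * R / lam) + 2 * L / lam * R := by
            have := (hS ⟨i, hi.2⟩).1
            have : 0 ≤ (i : ℝ) - 1 := by linarith
            gcongr
        _ = _ := by ring
    · simpa using hpos

lemma measurable_sgd {w : (Fin n → Pt d) → ℕ → Vec d} {u' : (Fin n → Pt d) → Fin n → ℝ}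
    (hu' : ∀ k, Measurable fun S => u' S k) (hw1 : ∀ S, w S 1 = h)
    (hrec : ∀ S (k : Fin n), w S (k.1 + 2) = w S (k.1 + 1) - (((k.1 + 1 : ℕ) : ℝ) * lam)⁻¹ •
          (u' S k • (S k).1 + lam • (w S (k.1 + 1) - h))) {i : ℕ} (hi : i ≤ n) :
    Measurable fun S => w S (i + 1) := by
  induction i with
  | zero => simp only [zero_add, hw1]; exact measurable_const
  | succ i ih =>
    have ih := ih (by omega)
    have := funext fun S => hrec S ⟨i, hi⟩
    simp only at this
    rw [this]
    have h1 : Measurable fun S : Fin n → Pt d => (S ⟨i, hi⟩).1 := (measurable_pi_apply _).fst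
    have h2 := hu' ⟨i, hi⟩
    fun_prop

lemma le_integral_proxPath (hn : 1 ≤ n) (hR : 0 < R) (hL : 0 < L) (hlam : 0 < lam)
    (hgm : Measurable (Function.uncurry g)) (hgc : ∀ y, Continuous fun a => g a y)
    {μ : Measure (Pt d)} [IsProbabilityMeasure μ] (hgood : ∀ᵐ p ∂μ, IsGoodPt g L R p)
    (hmm : ∀ i, Measurable (Function.uncurry (m i)))
    (hm : ∀ i, 5 ≤ i → ∀ c y, IsSubgradAt (fun a => g a y) (m i c y)
      (c - 2 * R ^ 2 / (lam * ((i : ℝ) - 1)) * m i c y)) (k : Fin n) :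
    Integrable (fun S : Fin n → Pt d => g ⟪(S k).1, h + proxPath lam m h S k⟫_ℝ (S k).2
        + lam / 2 * ‖proxPath lam m h S k‖ ^ 2) (Measure.pi fun _ : Fin n => μ) ∧
    ∫ S, (⨅ z, regRisk g lam S h z) ∂(Measure.pi fun _ : Fin n => μ)
      ≤ ∫ S, (g ⟪(S k).1, h + proxPath lam m h S k⟫_ℝ (S k).2
        + lam / 2 * ‖proxPath lam m h S k‖ ^ 2) ∂(Measure.pi fun _ : Fin n => μ) := by
  have hpm : Measurable fun S : Fin n → Pt d => proxPath lam m h S k := measurable_proxPath hmm k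
  have hint : Integrable (fun S : Fin n → Pt d => g ⟪(S k).1, h + proxPath lam m h S k⟫_ℝ (S k).2
        + lam / 2 * ‖proxPath lam m h S k‖ ^ 2) (Measure.pi fun _ : Fin n => μ) := by
    refine Integrable.of_bound
      (C := L * R * (‖h‖ + L * R / lam) + lam / 2 * (L * R / lam) ^ 2) ?_ ?_
    · exact ((measurable_inner_loss hgm k (hpm.const_add h)).add
        ((hpm.norm.pow_const 2).const_mul _)).aestronglyMeasurable
    · filter_upwards [ae_pi_forall (n := n) hgood] with S hS
      have hv := norm_proxPath_le (h := h) hR hL hlam hS hm k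
      refine (norm_add_le _ _).trans (add_le_add ?_ ?_)
      · refine ((hS k).abs_loss_le hL _).trans ?_
        gcongr
        exact (norm_add_le _ _).trans (by gcongr)
      · rw [Real.norm_of_nonneg (by positivity)]
        gcongr
  refine ⟨hint, ?_⟩
  exact le_integral_of_update_invariant
    (fun (p : Pt d) (v : Vec d) => g ⟪p.1, h + v⟫_ℝ p.2 + lam / 2 * ‖v‖ ^ 2)
    (fun S => proxPath lam m h S k) k (fun S p => proxPath_update S k p le_rfl)
    (fun v => integral_iInf_regRisk_le hn hR hL hlam hgm hgc hgood h v) hint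

lemma exists_prox_slopes {ℓ u : ℝ → ℝ → ℝ} (hum : ∀ a, Measurable (u a))
    (hu : ∀ a y, IsSubgradAt (fun s => ℓ s y) (u a y) a) (hR : 0 < R) (hlam : 0 < lam) :
    ∃ m : ℕ → ℝ → ℝ → ℝ, (∀ i, Measurable (Function.uncurry (m i))) ∧
      ∀ i, 5 ≤ i → ∀ c y, IsSubgradAt (fun a => ℓ a y) (m i c y)
        (c - 2 * R ^ 2 / (lam * ((i : ℝ) - 1)) * m i c y) := by
  have : ∀ i : ℕ, ∃ m : ℝ → ℝ → ℝ, Measurable (Function.uncurry m) ∧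
      (5 ≤ i → ∀ c y, IsSubgradAt (fun a => ℓ a y) (m c y)
        (c - 2 * R ^ 2 / (lam * ((i : ℝ) - 1)) * m c y)) := fun i => by
    by_cases hi : 5 ≤ i
    · have hi5 : (5 : ℝ) ≤ i := by exact_mod_cast hi
      have : 0 < (i : ℝ) - 1 := by linarith
      obtain ⟨m, h1, h2⟩ := exists_measurable_prox_slope hum hu
        (τ := 2 * R ^ 2 / (lam * ((i : ℝ) - 1))) (by positivity)
      exact ⟨m, h1, fun _ => h2⟩
    · exact ⟨fun _ _ => 0, measurable_const, fun h => absurd h hi⟩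
  choose m h1 h2 using this
  exact ⟨m, h1, h2⟩

lemma integrable_sgd_inner (hn : 1 ≤ n) (hlam : 0 < lam)
    {μ : Measure (Pt d)} [IsProbabilityMeasure μ] (hgood : ∀ᵐ p ∂μ, IsGoodPt g L R p)
    {w : (Fin n → Pt d) → ℕ → Vec d} {u' : (Fin n → Pt d) → Fin n → ℝ}
    (hu' : ∀ k, Measurable fun S => u' S k) (hw1 : ∀ S, w S 1 = h)
    (hsub : ∀ S (k : Fin n),
      IsSubgradAt (fun a => g a (S k).2) (u' S k) ⟪(S k).1, w S (k.1 + 1)⟫_ℝ)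
    (hrec : ∀ S (k : Fin n), w S (k.1 + 2) = w S (k.1 + 1) - (((k.1 + 1 : ℕ) : ℝ) * lam)⁻¹ •
          (u' S k • (S k).1 + lam • (w S (k.1 + 1) - h))) (v : Vec d) :
    Integrable (fun S => ⟪(-lam) • (w S (n + 1) - h), v⟫_ℝ) (Measure.pi fun _ : Fin n => μ) := by
  refine Integrable.of_bound (C := L * R * ‖v‖) ?_ ?_
  · have hw : Measurable fun S => w S (n + 1) := measurable_sgd hu' hw1 hrec le_rfl
    exact Measurable.aestronglyMeasurable (by fun_prop)
  · filter_upwards [ae_pi_forall (n := n) hgood] with S hS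
    refine (norm_inner_le_norm _ _).trans ?_
    gcongr
    exact norm_sgd_output_le hn hlam (fun k => (hS k).2.2) (fun k => (hS k).1) (hsub S) (hrec S)

lemma integral_iInf_regRisk_sub_le (hn : 1 ≤ n) (hR : 0 < R) (hL : 0 < L) (hlam : 0 < lam)
    (hgm : Measurable (Function.uncurry g)) (hgc : ∀ y, Continuous fun a => g a y)
    {μ : Measure (Pt d)} [IsProbabilityMeasure μ] (hgood : ∀ᵐ p ∂μ, IsGoodPt g L R p)
    (hmm : ∀ i, Measurable (Function.uncurry (m i)))
    (hm : ∀ i, 5 ≤ i → ∀ c y, IsSubgradAt (fun a => g a y) (m i c y)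
      (c - 2 * R ^ 2 / (lam * ((i : ℝ) - 1)) * m i c y))
    {w : (Fin n → Pt d) → ℕ → Vec d} {u' : (Fin n → Pt d) → Fin n → ℝ}
    (hu' : ∀ k, Measurable fun S => u' S k) (hw1 : ∀ S, w S 1 = h)
    (hsub : ∀ S (k : Fin n),
      IsSubgradAt (fun a => g a (S k).2) (u' S k) ⟪(S k).1, w S (k.1 + 1)⟫_ℝ)
    (hrec : ∀ S (k : Fin n), w S (k.1 + 2) = w S (k.1 + 1) - (((k.1 + 1 : ℕ) : ℝ) * lam)⁻¹ •
          (u' S k • (S k).1 + lam • (w S (k.1 + 1) - h))) (h' : Vec d) :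
    ∫ S, (⨅ z, regRisk g lam S h z) ∂(Measure.pi fun _ : Fin n => μ)
      - ∫ S, (⨅ z, regRisk g lam S h' z) ∂(Measure.pi fun _ : Fin n => μ)
      ≤ ∫ S, ⟪(-lam) • (w S (n + 1) - h), h - h'⟫_ℝ ∂(Measure.pi fun _ : Fin n => μ)
        + 2 * R ^ 2 * L ^ 2 * (Real.log n + 1) / (lam * n) := by
  have hn0 : (0 : ℝ) < n := by exact_mod_cast hn
  have hk := le_integral_proxPath (h := h) hn hR hL hlam hgm hgc hgood hmm hm
  have hinner := integrable_sgd_inner hn hlam hgood hu' hw1 hsub hrec (h - h')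
  set ε := 2 * R ^ 2 * L ^ 2 * (Real.log n + 1) / (lam * n)
  have hsumint := (integrable_finsetSum Finset.univ fun k _ => (hk k).1).const_mul (n : ℝ)⁻¹
  have hdiff : Integrable (fun S : Fin n → Pt d => (n : ℝ)⁻¹ *
      ∑ k : Fin n, (g ⟪(S k).1, h + proxPath lam m h S k⟫_ℝ (S k).2
        + lam / 2 * ‖proxPath lam m h S k‖ ^ 2) - ⟪(-lam) • (w S (n + 1) - h), h - h'⟫_ℝ)
      (Measure.pi fun _ : Fin n => μ) := hsumint.sub hinner
  have hmono : ∫ S, ((n : ℝ)⁻¹ * ∑ k : Fin n, (g ⟪(S k).1, h + proxPath lam m h S k⟫_ℝ (S k).2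
        + lam / 2 * ‖proxPath lam m h S k‖ ^ 2) - ⟪(-lam) • (w S (n + 1) - h), h - h'⟫_ℝ - ε)
          ∂(Measure.pi fun _ : Fin n => μ)
      ≤ ∫ S, (⨅ z, regRisk g lam S h' z) ∂(Measure.pi fun _ : Fin n => μ) := by
    refine integral_mono_ae (hdiff.sub (integrable_const _))
      (integrable_iInf_regRisk hn hR hL hlam hgm hgc hgood h') ?_
    filter_upwards [ae_pi_forall (n := n) hgood] with S hS
    refine le_ciInf fun z => ?_
    have := regRisk_ge_proxPath hn hR hL hlam (fun k => (hS k).2.2) (fun k => (hS k).1) (hw1 S)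
      (hsub S) (hrec S) hm h' z
    rw [← neg_sub h h', inner_neg_right] at this
    linarith
  rw [integral_sub hdiff (integrable_const _), integral_sub hsumint hinner,
    integral_const_mul, integral_finsetSum _ fun k _ => (hk k).1] at hmono
  simp only [integral_const, probReal_univ, one_smul] at hmono
  have hsum : ∫ S, (⨅ z, regRisk g lam S h z) ∂(Measure.pi fun _ : Fin n => μ)
      ≤ (n : ℝ)⁻¹ * ∑ k : Fin n, ∫ S, (g ⟪(S k).1, h + proxPath lam m h S k⟫_ℝ (S k).2
        + lam / 2 * ‖proxPath lam m h S k‖ ^ 2) ∂(Measure.pi fun _ : Fin n => μ) := by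
    rw [le_inv_mul_iff₀ hn0]
    refine le_trans (le_of_eq ?_) (Finset.sum_le_sum fun k _ => (hk k).2)
    simp
  linarith

end Task

section Meta

variable {d n : ℕ} {ℓ : ℝ → ℝ → ℝ} {lam L R : ℝ}

lemma regRisk_eq_add (S : Fin n → Pt d) (h z : Vec d) :
    regRisk ℓ lam S h z
      = empRisk ℓ S 0 + regRisk (fun a y => ℓ a y - ℓ 0 y) lam S h z := by
  simp only [regRisk, empRisk, inner_zero_right, Finset.sum_sub_distrib]
  ring

lemma bddBelow_regRisk_loss {S : Fin n → Pt d} (hn : 1 ≤ n) (hR : 0 < R) (hL : 0 < L)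
    (hlam : 0 < lam) (hS : ∀ k, IsGoodPt (fun a y => ℓ a y - ℓ 0 y) L R (S k)) (h : Vec d) :
    BddBelow (Set.range fun z => regRisk ℓ lam S h z) := by
  refine ⟨empRisk ℓ S 0 + -(L * R * ‖h‖ + (L * R) ^ 2 / (2 * lam)), ?_⟩
  rintro _ ⟨z, rfl⟩
  change _ ≤ regRisk ℓ lam S h z
  rw [regRisk_eq_add]
  gcongr
  exact regRisk_ge hn hR hL hlam hS h z

lemma iInf_regRisk_eq_add {S : Fin n → Pt d} (hn : 1 ≤ n) (hR : 0 < R) (hL : 0 < L)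
    (hlam : 0 < lam) (hS : ∀ k, IsGoodPt (fun a y => ℓ a y - ℓ 0 y) L R (S k)) (h : Vec d) :
    ⨅ z, regRisk ℓ lam S h z
      = empRisk ℓ S 0 + ⨅ z, regRisk (fun a y => ℓ a y - ℓ 0 y) lam S h z := by
  rw [add_ciInf (bddBelow_regRisk hn hR hL hlam hS h)]
  exact iInf_congr fun z => regRisk_eq_add S h z

/-- The meta-objective is convex in the bias. -/
lemma convexOn_iInf_regRisk {S : Fin n → Pt d} (hn : 1 ≤ n) (hR : 0 < R) (hL : 0 < L)
    (hlam : 0 < lam) (hconv : ∀ y, ConvexOn ℝ Set.univ fun a => ℓ a y)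
    (hS : ∀ k, IsGoodPt (fun a y => ℓ a y - ℓ 0 y) L R (S k)) :
    ConvexOn ℝ Set.univ fun h => ⨅ z, regRisk ℓ lam S h z := by
  refine ⟨convex_univ, fun h₁ _ h₂ _ a b ha hb hab => ?_⟩
  simp only [smul_eq_mul]
  have hbdd := bddBelow_regRisk_loss (ℓ := ℓ) hn hR hL hlam hS
  refine le_of_forall_pos_le_add fun δ hδ => ?_
  obtain ⟨z₁, hz₁⟩ := exists_lt_of_ciInf_lt
    (lt_add_of_pos_right (⨅ z, regRisk ℓ lam S h₁ z) hδ)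
  obtain ⟨z₂, hz₂⟩ := exists_lt_of_ciInf_lt
    (lt_add_of_pos_right (⨅ z, regRisk ℓ lam S h₂ z) hδ)
  refine (ciInf_le (hbdd _) (a • z₁ + b • z₂)).trans ?_
  have hjoint : regRisk ℓ lam S (a • h₁ + b • h₂) (a • z₁ + b • z₂)
      ≤ a * regRisk ℓ lam S h₁ z₁ + b * regRisk ℓ lam S h₂ z₂ := by
    have hemp : empRisk ℓ S (a • z₁ + b • z₂) ≤ a * empRisk ℓ S z₁ + b * empRisk ℓ S z₂ := by
      simp only [empRisk]
      have : a * ((n : ℝ)⁻¹ * ∑ k, ℓ ⟪(S k).1, z₁⟫_ℝ (S k).2)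
          + b * ((n : ℝ)⁻¹ * ∑ k, ℓ ⟪(S k).1, z₂⟫_ℝ (S k).2)
          = (n : ℝ)⁻¹ * ∑ k, (a * ℓ ⟪(S k).1, z₁⟫_ℝ (S k).2 + b * ℓ ⟪(S k).1, z₂⟫_ℝ (S k).2) := by
        rw [Finset.sum_add_distrib, ← Finset.mul_sum, ← Finset.mul_sum]
        ring
      rw [this]
      gcongr with k
      have := (hconv (S k).2).2 (Set.mem_univ ⟪(S k).1, z₁⟫_ℝ) (Set.mem_univ ⟪(S k).1, z₂⟫_ℝ)
        ha hb hab
      simpa only [smul_eq_mul, inner_add_right, real_inner_smul_right] using this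
    have hsq : ‖a • z₁ + b • z₂ - (a • h₁ + b • h₂)‖ ^ 2
        ≤ a * ‖z₁ - h₁‖ ^ 2 + b * ‖z₂ - h₂‖ ^ 2 := by
      have hc := (convexOn_univ_norm (E := Vec d)).pow (fun _ _ => norm_nonneg _) 2
      have := hc.2 (Set.mem_univ (z₁ - h₁)) (Set.mem_univ (z₂ - h₂)) ha hb hab
      simp only [smul_eq_mul, Pi.pow_apply] at this
      rwa [show a • (z₁ - h₁) + b • (z₂ - h₂) = a • z₁ + b • z₂ - (a • h₁ + b • h₂) by module]
        at this
    have := mul_le_mul_of_nonneg_left hsq (by positivity : 0 ≤ lam / 2)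
    simp only [regRisk]
    linarith
  have e1 := mul_le_mul_of_nonneg_left hz₁.le ha
  have e2 := mul_le_mul_of_nonneg_left hz₂.le hb
  have e3 : a * δ + b * δ = δ := by rw [← add_mul, hab, one_mul]
  linarith

lemma integral_metaObjective_sub_le {u : ℝ → ℝ → ℝ} (hn : 1 ≤ n) (hR : 0 < R) (hL : 0 < L)
    (hlam : 0 < lam) (hum : ∀ a, Measurable (u a))
    (hu : ∀ a y, IsSubgradAt (fun s => ℓ s y) (u a y) a)
    {μ : Measure (Pt d)} [IsProbabilityMeasure μ]
    (hgood : ∀ᵐ p ∂μ, IsGoodPt (fun a y => ℓ a y - ℓ 0 y) L R p)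
    (hint : ∀ h : Vec d, Integrable (fun S => ⨅ z, regRisk ℓ lam S h z)
      (Measure.pi fun _ : Fin n => μ)) {h : Vec d}
    {w : (Fin n → Pt d) → ℕ → Vec d} {u' : (Fin n → Pt d) → Fin n → ℝ}
    (hu' : ∀ k, Measurable fun S => u' S k) (hw1 : ∀ S, w S 1 = h)
    (hsub : ∀ S (k : Fin n),
      IsSubgradAt (fun a => ℓ a (S k).2) (u' S k) ⟪(S k).1, w S (k.1 + 1)⟫_ℝ)
    (hrec : ∀ S (k : Fin n), w S (k.1 + 2) = w S (k.1 + 1) - (((k.1 + 1 : ℕ) : ℝ) * lam)⁻¹ •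
          (u' S k • (S k).1 + lam • (w S (k.1 + 1) - h))) (h' : Vec d) :
    ∫ S, (⨅ z, regRisk ℓ lam S h z) ∂(Measure.pi fun _ : Fin n => μ)
      - ∫ S, (⨅ z, regRisk ℓ lam S h' z) ∂(Measure.pi fun _ : Fin n => μ)
      ≤ ∫ S, ⟪(-lam) • (w S (n + 1) - h), h - h'⟫_ℝ ∂(Measure.pi fun _ : Fin n => μ)
        + 2 * R ^ 2 * L ^ 2 * (Real.log n + 1) / (lam * n) := by
  have hshift : ∀ {v a y}, IsSubgradAt (fun s => ℓ s y) v a →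
      IsSubgradAt (fun s => ℓ s y - ℓ 0 y) v a := fun hv b => by
    have := hv b
    simp only at this ⊢
    linarith
  have hgm := measurable_uncurry_loss_sub hum hu
  have hgc : ∀ y, Continuous fun a => ℓ a y - ℓ 0 y := fun y =>
    (continuous_of_isSubgradAt fun a => hu a y).sub continuous_const
  obtain ⟨m, hmm, hm⟩ := exists_prox_slopes (ℓ := fun a y => ℓ a y - ℓ 0 y) hum
    (fun a y => hshift (hu a y)) hR hlam
  have hi := integrable_iInf_regRisk (n := n) hn hR hL hlam hgm hgc hgood
  refine le_trans (le_of_eq ?_) (integral_iInf_regRisk_sub_le hn hR hL hlam hgm hgc hgood hmm hm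
    hu' hw1 (fun S k => hshift (hsub S k)) hrec h')
  rw [← integral_sub (hint h) (hint h'), ← integral_sub (hi h) (hi h')]
  refine integral_congr_ae ?_
  filter_upwards [ae_pi_forall (n := n) hgood] with S hS
  rw [iInf_regRisk_eq_add hn hR hL hlam hS, iInf_regRisk_eq_add hn hR hL hlam hS,
    add_sub_add_left_eq_sub]

end Meta

section Sampling

lemma aemeasurable_of_isProbabilityMeasure_bind {Θ X : Type*} [MeasurableSpace Θ]
    [MeasurableSpace X] {ρ : Measure Θ} {κ : Θ → Measure X} [IsProbabilityMeasure (ρ.bind κ)] :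
    AEMeasurable κ ρ := by
  by_contra hκ
  have h0 : ρ.bind κ = 0 := by
    rw [Measure.bind, Measure.map_of_not_aemeasurable hκ, Measure.join_zero]
  exact IsProbabilityMeasure.ne_zero (ρ.bind κ) h0

lemma ae_bind_of_forall_ae {Θ X : Type*} [MeasurableSpace Θ] [MeasurableSpace X] {ρ : Measure Θ}
    {κ : Θ → Measure X} (hκ : AEMeasurable κ ρ) {P : X → Prop} (hP : MeasurableSet {x | P x})
    (h : ∀ θ, ∀ᵐ x ∂(κ θ), P x) : ∀ᵐ x ∂(ρ.bind κ), P x := by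
  rw [ae_iff, ← Set.compl_ofPred, Measure.bind_apply hP.compl hκ]
  have : ∀ θ, κ θ {x | P x}ᶜ = 0 := fun θ => ae_iff.1 (h θ)
  simp [this]

lemma ofReal_integral_le_lintegral {X : Type*} [MeasurableSpace X] {μ : Measure X} {f : X → ℝ}
    (hf : Integrable f μ) : ENNReal.ofReal (∫ x, f x ∂μ) ≤ ∫⁻ x, ENNReal.ofReal (f x) ∂μ := by
  have h1 : ∫ x, f x ∂μ ≤ ∫ x, max (f x) 0 ∂μ :=
    integral_mono hf hf.pos_part fun x => le_max_left _ _
  refine (ENNReal.ofReal_le_ofReal h1).trans (le_of_eq ?_)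
  rw [ofReal_integral_eq_lintegral_ofReal hf.pos_part (ae_of_all _ fun x => le_max_right _ _)]
  simp

lemma integral_le_integral_bind {Θ X : Type*} [MeasurableSpace Θ] [MeasurableSpace X]
    {ρ : Measure Θ} [IsProbabilityMeasure ρ] {κ : Θ → Measure X}
    [IsProbabilityMeasure (ρ.bind κ)] [∀ θ, IsProbabilityMeasure (κ θ)]
    {q : X → ℝ} (hq : Measurable q) {C : ℝ} (hC : ∀ θ, ∀ᵐ x ∂(κ θ), |q x| ≤ C) {e : Θ → ℝ}
    (he : Integrable e ρ) (hle : ∀ θ, e θ ≤ ∫ x, q x ∂(κ θ)) :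
    ∫ θ, e θ ∂ρ ≤ ∫ x, q x ∂(ρ.bind κ) := by
  have hκ : AEMeasurable κ ρ := aemeasurable_of_isProbabilityMeasure_bind
  have hCν : ∀ᵐ x ∂(ρ.bind κ), |q x| ≤ C :=
    ae_bind_of_forall_ae hκ (measurableSet_le hq.abs measurable_const) hC
  have hint : Integrable q (ρ.bind κ) := Integrable.of_bound hq.aestronglyMeasurable C hCν
  have hintθ : ∀ θ, Integrable q (κ θ) := fun θ =>
    Integrable.of_bound hq.aestronglyMeasurable C (hC θ)
  have hnn : ∀ {x : X}, |q x| ≤ C → 0 ≤ q x + C := fun hx => by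
    linarith [(abs_le.1 hx).1]
  have hintC : Integrable (fun x => q x + C) (ρ.bind κ) := hint.add (integrable_const C)
  have hintθC : ∀ θ, Integrable (fun x => q x + C) (κ θ) := fun θ =>
    (hintθ θ).add (integrable_const C)
  have heC : Integrable (fun θ => e θ + C) ρ := he.add (integrable_const C)
  have h1 : ENNReal.ofReal (∫ θ, (e θ + C) ∂ρ) ≤ ENNReal.ofReal (∫ x, (q x + C) ∂(ρ.bind κ)) := by
    rw [ofReal_integral_eq_lintegral_ofReal hintC
      (hCν.mono fun x hx => hnn hx),
      Measure.lintegral_bind hκ (hq.add_const C).ennreal_ofReal.aemeasurable]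
    refine (ofReal_integral_le_lintegral heC).trans
      (lintegral_mono fun θ => ?_)
    rw [← ofReal_integral_eq_lintegral_ofReal (hintθC θ)
      ((hC θ).mono fun x hx => hnn hx)]
    refine ENNReal.ofReal_le_ofReal ?_
    rw [integral_add (hintθ θ) (integrable_const C)]
    simpa using hle θ
  have h2 : 0 ≤ ∫ x, (q x + C) ∂(ρ.bind κ) :=
    integral_nonneg_of_ae (hCν.mono fun x hx => hnn hx)
  have h3 := (ENNReal.ofReal_le_ofReal_iff h2).1 h1
  rw [integral_add he (integrable_const C), integral_add hint (integrable_const C)] at h3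
  simpa using h3

/-- Telescoping of a potential along a recursion driven by independent samples. The state need not
be a measurable function of the samples. -/
lemma integral_le_of_potential {X V : Type*} [MeasurableSpace X] {ν : Measure X}
    [IsProbabilityMeasure ν] (step : V → X → V) (D B : V → ℝ) (c : ℝ) (hB : ∀ v, 0 ≤ B v)
    (hint : ∀ v, Integrable (fun x => B (step v x)) ν)
    (hstep : ∀ v, D v + ∫ x, B (step v x) ∂ν ≤ B v + c) (T : ℕ) (v : V)
    (s : (Fin T → X) → ℕ → V) (hs0 : ∀ ω, s ω 0 = v)
    (hs : ∀ ω (t : Fin T), s ω (t.1 + 1) = step (s ω t) (ω t)) (G : (Fin T → X) → ℝ)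
    (hG : Integrable G (Measure.pi fun _ : Fin T => ν))
    (hGle : ∀ᵐ ω ∂(Measure.pi fun _ : Fin T => ν), G ω ≤ ∑ t : Fin T, D (s ω t)) :
    ∫ ω, G ω ∂(Measure.pi fun _ : Fin T => ν) ≤ B v + T * c := by
  induction T generalizing v with
  | zero =>
    have : ∫ ω, G ω ∂(Measure.pi fun _ : Fin 0 => ν) ≤ 0 :=
      integral_nonpos_of_ae (by filter_upwards [hGle] with ω hω; simpa using hω)
    simpa using this.trans (hB v)
  | succ T ih =>
    have hmp := (measurePreserving_piFinSuccAbove (fun _ : Fin (T + 1) => ν) 0).symm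
    have hG' : Integrable (fun p : X × (Fin T → X) => G (Fin.cons p.1 p.2))
        (ν.prod (Measure.pi fun _ : Fin T => ν)) := by
      have := hmp.integrable_comp_of_integrable hG
      simpa [Function.comp_def, MeasurableEquiv.piFinSuccAbove, Fin.insertNthEquiv] using this
    have hle' : ∀ᵐ p : X × (Fin T → X) ∂(ν.prod (Measure.pi fun _ : Fin T => ν)),
        G (Fin.cons p.1 p.2) ≤ ∑ t : Fin (T + 1), D (s (Fin.cons p.1 p.2) t) := by
      have := hmp.quasiMeasurePreserving.ae hGle
      simpa [MeasurableEquiv.piFinSuccAbove, Fin.insertNthEquiv] using this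
    have hval : ∫ ω, G ω ∂(Measure.pi fun _ : Fin (T + 1) => ν)
        = ∫ x, ∫ ω', G (Fin.cons x ω') ∂(Measure.pi fun _ : Fin T => ν) ∂ν := by
      rw [← integral_prod _ hG', ← hmp.integral_comp']
      simp [MeasurableEquiv.piFinSuccAbove, Fin.insertNthEquiv]
    have hx : ∀ᵐ x ∂ν, ∫ ω', G (Fin.cons x ω') ∂(Measure.pi fun _ : Fin T => ν)
        ≤ D v + B (step v x) + T * c := by
      filter_upwards [hG'.prod_right_ae, Measure.ae_ae_of_ae_prod hle'] with x hx1 hx2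
      have := ih (step v x) (fun ω' t => s (Fin.cons x ω') (t + 1))
        (fun ω' => by simpa [hs0] using hs (Fin.cons x ω') 0)
        (fun ω' t => by simpa using hs (Fin.cons x ω') t.succ)
        (fun ω' => G (Fin.cons x ω') - D v) (hx1.sub (integrable_const _))
        (by
          filter_upwards [hx2] with ω' hω'
          rw [Fin.sum_univ_succ] at hω'
          simp only [Fin.val_zero, hs0, Fin.val_succ] at hω'
          linarith)
      rw [integral_sub hx1 (integrable_const _)] at this
      simp only [integral_const, probReal_univ, one_smul] at this
      linarith
    have hDB : Integrable (fun x => D v + B (step v x)) ν := (integrable_const _).add (hint v)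
    have hsumint : Integrable (fun x => D v + B (step v x) + T * c) ν :=
      hDB.add (integrable_const _)
    have hval2 : ∫ x, (D v + B (step v x) + T * c) ∂ν
        = D v + ∫ x, B (step v x) ∂ν + T * c := by
      rw [integral_add hDB (integrable_const _), integral_add (integrable_const _) (hint v)]
      simp
    rw [hval]
    refine (integral_mono_ae hG'.integral_prod_left hsumint hx).trans ?_
    rw [hval2]
    push_cast
    linarith [hstep v]

end Sampling

section Environment

variable {d n : ℕ} {ℓ : ℝ → ℝ → ℝ} {lam L R : ℝ}

/-- The first step of the within-task algorithm provides a measurable selection of subgradients. -/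
lemma exists_measurable_isSubgradAt (hd : 1 ≤ d) (hn : 1 ≤ n)
    {W : Vec d → (Fin n → Pt d) → ℕ → Vec d} {u' : Vec d → (Fin n → Pt d) → Fin n → ℝ}
    (hu' : ∀ h k, Measurable fun S => u' h S k) (hW1 : ∀ h S, W h S 1 = h)
    (hsub : ∀ h S (k : Fin n),
      IsSubgradAt (fun a => ℓ a (S k).2) (u' h S k) ⟪(S k).1, W h S (k.1 + 1)⟫_ℝ) :
    ∃ u : ℝ → ℝ → ℝ, (∀ a, Measurable (u a)) ∧
      ∀ a y, IsSubgradAt (fun s => ℓ s y) (u a y) a := by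
  set x : Vec d := EuclideanSpace.single ⟨0, hd⟩ 1 with hx
  refine ⟨fun a y => u' (a • x) (fun _ => (x, y)) ⟨0, hn⟩, fun a => ?_, fun a y => ?_⟩
  · have hm : Measurable fun y : ℝ => fun _ : Fin n => (x, y) :=
      measurable_pi_lambda _ fun _ => measurable_const.prodMk measurable_id
    exact (hu' (a • x) ⟨0, hn⟩).comp hm
  · have h := hsub (a • x) (fun _ => (x, y)) ⟨0, hn⟩
    have hxx : ⟪x, a • x⟫_ℝ = a := by simp [real_inner_smul_right, hx]
    simpa only [zero_add, hW1, hxx] using h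

variable {Θ : Type*} [MeasurableSpace Θ] {ρ : Measure Θ} {task : Θ → Measure (Pt d)}
  [∀ θ, IsProbabilityMeasure (task θ)]

lemma convexOn_integral_metaObjective (hn : 1 ≤ n) (hR : 0 < R) (hL : 0 < L) (hlam : 0 < lam)
    (hconv : ∀ y, ConvexOn ℝ Set.univ fun a => ℓ a y)
    (hgood : ∀ θ, ∀ᵐ p ∂(task θ), IsGoodPt (fun a y => ℓ a y - ℓ 0 y) L R p)
    (hinner : ∀ (h : Vec d) θ, Integrable (fun S => ⨅ z, regRisk ℓ lam S h z)
      (Measure.pi fun _ : Fin n => task θ))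
    (houter : ∀ h : Vec d, Integrable (fun θ => ∫ S, (⨅ z, regRisk ℓ lam S h z)
      ∂(Measure.pi fun _ : Fin n => task θ)) ρ) :
    ConvexOn ℝ Set.univ fun h : Vec d => ∫ θ, (∫ S, (⨅ z, regRisk ℓ lam S h z)
      ∂(Measure.pi fun _ : Fin n => task θ)) ∂ρ := by
  refine ⟨convex_univ, fun h₁ _ h₂ _ a b ha hb hab => ?_⟩
  simp only [smul_eq_mul]
  rw [← integral_const_mul, ← integral_const_mul,
    ← integral_add ((houter h₁).const_mul a) ((houter h₂).const_mul b)]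
  refine integral_mono (houter _) (((houter h₁).const_mul a).add ((houter h₂).const_mul b))
    fun θ => ?_
  simp only
  rw [← integral_const_mul, ← integral_const_mul,
    ← integral_add ((hinner h₁ θ).const_mul a) ((hinner h₂ θ).const_mul b)]
  refine integral_mono_ae (hinner _ θ)
    (((hinner h₁ θ).const_mul a).add ((hinner h₂ θ).const_mul b)) ?_
  filter_upwards [ae_pi_forall (n := n) (hgood θ)] with S hS
  exact (convexOn_iInf_regRisk hn hR hL hlam hconv hS).2 (Set.mem_univ h₁) (Set.mem_univ h₂)
    ha hb hab

/-- The joint law of a task and a dataset drawn from it. -/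
def obsKernel (n : ℕ) (task : Θ → Measure (Pt d)) (θ : Θ) : Measure (Θ × (Fin n → Pt d)) :=
  (Measure.dirac θ).prod (Measure.pi fun _ : Fin n => task θ)

instance (θ : Θ) : IsProbabilityMeasure (obsKernel n task θ) :=
  inferInstanceAs (IsProbabilityMeasure ((Measure.dirac θ).prod (Measure.pi _)))

lemma measurePreserving_snd_obsKernel (θ : Θ) :
    MeasurePreserving Prod.snd (obsKernel n task θ) (Measure.pi fun _ : Fin n => task θ) :=
  measurePreserving_snd

variable [IsProbabilityMeasure ρ] [IsProbabilityMeasure (ρ.bind (obsKernel n task))]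

section Gradient

variable {h : Vec d} {w : (Fin n → Pt d) → ℕ → Vec d} {u' : (Fin n → Pt d) → Fin n → ℝ}

lemma ae_norm_sgd_output_le (hn : 1 ≤ n) (hlam : 0 < lam)
    (hgood : ∀ θ, ∀ᵐ p ∂(task θ), IsGoodPt (fun a y => ℓ a y - ℓ 0 y) L R p)
    (hsub : ∀ S (k : Fin n),
      IsSubgradAt (fun a => ℓ a (S k).2) (u' S k) ⟪(S k).1, w S (k.1 + 1)⟫_ℝ)
    (hrec : ∀ S (k : Fin n), w S (k.1 + 2) = w S (k.1 + 1) - (((k.1 + 1 : ℕ) : ℝ) * lam)⁻¹ •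
          (u' S k • (S k).1 + lam • (w S (k.1 + 1) - h))) (θ : Θ) :
    ∀ᵐ x ∂(obsKernel n task θ), ‖(-lam) • (w x.2 (n + 1) - h)‖ ≤ L * R := by
  refine (measurePreserving_snd_obsKernel θ).quasiMeasurePreserving.ae
    (p := fun S => ‖(-lam) • (w S (n + 1) - h)‖ ≤ L * R) ?_
  filter_upwards [ae_pi_forall (n := n) (hgood θ)] with S hS
  exact norm_sgd_output_le hn hlam (fun k a b => by simpa using (hS k).2.2 a b)
    (fun k => (hS k).1) (hsub S) (hrec S)

/-- Approximate subgradient inequality for the meta-objective, averaged over the environment. -/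
lemma integral_metaObjective_sub_le_environment {u : ℝ → ℝ → ℝ} (hn : 1 ≤ n) (hR : 0 < R)
    (hL : 0 < L) (hlam : 0 < lam) (hum : ∀ a, Measurable (u a))
    (hu : ∀ a y, IsSubgradAt (fun s => ℓ s y) (u a y) a)
    (hgood : ∀ θ, ∀ᵐ p ∂(task θ), IsGoodPt (fun a y => ℓ a y - ℓ 0 y) L R p)
    (hinner : ∀ (h : Vec d) θ, Integrable (fun S => ⨅ z, regRisk ℓ lam S h z)
      (Measure.pi fun _ : Fin n => task θ))
    (houter : ∀ h : Vec d, Integrable (fun θ => ∫ S, (⨅ z, regRisk ℓ lam S h z)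
      ∂(Measure.pi fun _ : Fin n => task θ)) ρ)
    (hu' : ∀ k, Measurable fun S => u' S k) (hw1 : ∀ S, w S 1 = h)
    (hsub : ∀ S (k : Fin n),
      IsSubgradAt (fun a => ℓ a (S k).2) (u' S k) ⟪(S k).1, w S (k.1 + 1)⟫_ℝ)
    (hrec : ∀ S (k : Fin n), w S (k.1 + 2) = w S (k.1 + 1) - (((k.1 + 1 : ℕ) : ℝ) * lam)⁻¹ •
          (u' S k • (S k).1 + lam • (w S (k.1 + 1) - h))) (h' : Vec d) :
    ∫ θ, (∫ S, (⨅ z, regRisk ℓ lam S h z) ∂(Measure.pi fun _ : Fin n => task θ)) ∂ρ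
      - ∫ θ, (∫ S, (⨅ z, regRisk ℓ lam S h' z) ∂(Measure.pi fun _ : Fin n => task θ)) ∂ρ
      ≤ ∫ x, ⟪(-lam) • (w x.2 (n + 1) - h), h - h'⟫_ℝ ∂(ρ.bind (obsKernel n task))
        + 2 * R ^ 2 * L ^ 2 * (Real.log n + 1) / (lam * n) := by
  set ε := 2 * R ^ 2 * L ^ 2 * (Real.log n + 1) / (lam * n) with hε
  have hw : Measurable fun S => w S (n + 1) := measurable_sgd hu' hw1 hrec le_rfl
  have hq : Measurable fun S => ⟪(-lam) • (w S (n + 1) - h), h - h'⟫_ℝ := by fun_prop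
  have hdiff : Integrable (fun θ => ∫ S, (⨅ z, regRisk ℓ lam S h z)
      ∂(Measure.pi fun _ : Fin n => task θ) - ∫ S, (⨅ z, regRisk ℓ lam S h' z)
      ∂(Measure.pi fun _ : Fin n => task θ)) ρ := (houter h).sub (houter h')
  have key := integral_le_integral_bind (ρ := ρ) (κ := obsKernel n task)
    (hq.comp measurable_snd) (C := L * R * ‖h - h'‖)
    (fun θ => by
      filter_upwards [ae_norm_sgd_output_le hn hlam hgood hsub hrec θ] with x hx
      exact (abs_real_inner_le_norm _ _).trans (by gcongr))
    (e := fun θ => ∫ S, (⨅ z, regRisk ℓ lam S h z) ∂(Measure.pi fun _ : Fin n => task θ)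
      - ∫ S, (⨅ z, regRisk ℓ lam S h' z) ∂(Measure.pi fun _ : Fin n => task θ) - ε)
    (hdiff.sub (integrable_const ε))
    (fun θ => by
      have h1 := integral_metaObjective_sub_le hn hR hL hlam hum hu (hgood θ)
        (fun h => hinner h θ) hu' hw1 hsub hrec h'
      have h2 : ∫ x, ((fun S => ⟪(-lam) • (w S (n + 1) - h), h - h'⟫_ℝ) ∘ Prod.snd) x
          ∂(obsKernel n task θ)
          = ∫ S, ⟪(-lam) • (w S (n + 1) - h), h - h'⟫_ℝ ∂(Measure.pi fun _ : Fin n => task θ) := by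
        rw [← (measurePreserving_snd_obsKernel (n := n) (task := task) θ).map_eq,
          integral_map measurable_snd.aemeasurable hq.aestronglyMeasurable]
        rfl
      rw [h2]
      linarith)
  rw [integral_sub hdiff (integrable_const ε), integral_sub (houter h) (houter h')] at key
  simp only [Function.comp_apply, integral_const, probReal_univ, one_smul] at key
  linarith

end Gradient

lemma norm_sub_smul_sub_sq {E : Type*} [NormedAddCommGroup E] [InnerProductSpace ℝ E] (γ : ℝ)
    (v g h : E) :
    ‖v - γ • g - h‖ ^ 2 = ‖v - h‖ ^ 2 - 2 * γ * ⟪g, v - h⟫_ℝ + γ ^ 2 * ‖g‖ ^ 2 := by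
  rw [sub_right_comm, norm_sub_sq_real, real_inner_smul_right, norm_smul, mul_pow,
    Real.norm_eq_abs, sq_abs, real_inner_comm]
  ring

lemma integrable_and_integral_norm_step_le {X E : Type*} [MeasurableSpace X]
    [NormedAddCommGroup E] [InnerProductSpace ℝ E] [MeasurableSpace E] [BorelSpace E]
    [SecondCountableTopology E] {ν : Measure X} [IsProbabilityMeasure ν] {g : X → E}
    (hg : Measurable g) {M γ : ℝ} (hγ : 0 < γ) (hM : ∀ᵐ x ∂ν, ‖g x‖ ≤ M) (v h : E) :
    Integrable (fun x => ‖v - γ • g x - h‖ ^ 2 / (2 * γ)) ν ∧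
      ∫ x, ⟪g x, v - h⟫_ℝ ∂ν + ∫ x, ‖v - γ • g x - h‖ ^ 2 / (2 * γ) ∂ν
        ≤ ‖v - h‖ ^ 2 / (2 * γ) + γ * M ^ 2 / 2 := by
  have hinner : Integrable (fun x => ⟪g x, v - h⟫_ℝ) ν := by
    refine Integrable.of_bound (C := M * ‖v - h‖)
      (Measurable.aestronglyMeasurable (by fun_prop)) ?_
    filter_upwards [hM] with x hx
    exact (norm_inner_le_norm _ _).trans (by gcongr)
  have hsq : Integrable (fun x => ‖g x‖ ^ 2) ν := by
    refine Integrable.of_bound (C := M ^ 2) (Measurable.aestronglyMeasurable (by fun_prop)) ?_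
    filter_upwards [hM] with x hx
    rw [norm_pow, norm_norm]
    gcongr
  have hsqle : ∫ x, ‖g x‖ ^ 2 ∂ν ≤ M ^ 2 := by
    have := integral_mono_ae hsq (integrable_const (M ^ 2))
      (hM.mono fun x hx => by simp only; gcongr)
    simpa using this
  have heq : (fun x => ‖v - γ • g x - h‖ ^ 2 / (2 * γ))
      = fun x => ‖v - h‖ ^ 2 / (2 * γ) - ⟪g x, v - h⟫_ℝ + γ / 2 * ‖g x‖ ^ 2 := by
    funext x
    rw [norm_sub_smul_sub_sq]
    field_simp
  have hA : Integrable (fun x => ‖v - h‖ ^ 2 / (2 * γ) - ⟪g x, v - h⟫_ℝ) ν :=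
    (integrable_const _).sub hinner
  rw [heq]
  refine ⟨hA.add (hsq.const_mul _), ?_⟩
  rw [integral_add hA (hsq.const_mul _), integral_sub (integrable_const _) hinner,
    integral_const_mul]
  simp only [integral_const, probReal_univ, one_smul]
  have := mul_le_mul_of_nonneg_left hsqle (by positivity : 0 ≤ γ / 2)
  linarith

/-- The regret bound evaluated at the prescribed step size. -/
lemma regret_stepSize_le {a M c : ℝ} {T : ℕ} (hT : 1 ≤ T) (ha : 0 < a) (hM : 0 < M) (hc : 1 ≤ c)
    {γ : ℝ} (hγ : γ = √2 * a / M * (√(T * c))⁻¹) :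
    a ^ 2 / (2 * γ) + T * (γ * M ^ 2 / 2) ≤ T * (a * M * √(2 * c / T)) := by
  have hT0 : (0 : ℝ) < T := by exact_mod_cast hT
  have hc0 : 0 < c := by linarith
  have hs := Real.sq_sqrt (show (0 : ℝ) ≤ 2 by norm_num)
  have hr := Real.sq_sqrt (show 0 ≤ (T : ℝ) * c by positivity)
  have hs0 : 0 < √2 := by positivity
  have hr0 : 0 < √(T * c) := by positivity
  have hrhs : T * (a * M * √(2 * c / T)) = a * M * (√2 * √(T * c)) := by
    have : √(2 * c / T) = √2 * √(T * c) / T := by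
      rw [← Real.sqrt_mul (by norm_num), eq_div_iff hT0.ne']
      nth_rewrite 2 [← Real.sqrt_sq hT0.le]
      rw [← Real.sqrt_mul (by positivity)]
      congr 1
      field_simp
    rw [this]
    field_simp
  have hTr : (T : ℝ) ≤ √(T * c) ^ 2 := by rw [hr]; nlinarith
  rw [hrhs, hγ]
  set s := √2
  set r := √(T * c)
  have e1 : a ^ 2 / (2 * (s * a / M * r⁻¹)) = a * M * (s * r) / 4 := by
    field_simp
    nlinarith
  have e2 : T * (s * a / M * r⁻¹ * M ^ 2 / 2) ≤ a * M * (s * r) / 2 := by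
    have : T * (s * a / M * r⁻¹ * M ^ 2 / 2) = a * M * s / 2 * (T / r) := by field_simp
    rw [this]
    have h3 : T / r ≤ r := by rw [div_le_iff₀ hr0]; nlinarith
    calc _ ≤ a * M * s / 2 * r := by gcongr
      _ = _ := by ring
  have : 0 ≤ a * M * (s * r) := by positivity
  linarith

end Environment

/-- Convergence rate of the meta-algorithm with approximate gradients:
for a fixed nonzero comparator `ĥ` and step size
`γ = (√2‖ĥ‖/(LR))·(T(1 + 4(log n + 1)/n))^{-1/2}`,
`E[Ê_n(h̄_T)] - Ê_n(ĥ) ≤ ‖ĥ‖LR√(2(1 + 4(log n + 1)/n)/T) + 2R²L²(log n + 1)/(λn)`,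
where `Ê_n(h) = E_{μ∼ρ} E_{Z_n∼μⁿ} L_{Z_n}(h)`. -/
theorem stmt17
    (d n T : ℕ) (hd : 1 ≤ d) (hn : 1 ≤ n) (hT : 1 ≤ T)
    (R L lam : ℝ) (hR : 0 < R) (hL : 0 < L) (hlam : 0 < lam)
    (Y : Set ℝ) (ℓ : ℝ → ℝ → ℝ)
    (hℓ0 : ∀ a y, y ∈ Y → 0 ≤ ℓ a y)
    (hℓconv : ∀ y ∈ Y, ConvexOn ℝ Set.univ fun a => ℓ a y)
    (hℓlip : ∀ y ∈ Y, ∀ a b, |ℓ a y - ℓ b y| ≤ L * |a - b|)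
    -- the environment of tasks
    (Θ : Type*) [MeasurableSpace Θ]
    (ρ : Measure Θ) [IsProbabilityMeasure ρ]
    (task : Θ → Measure (Pt d))
    (htaskprob : ∀ θ, IsProbabilityMeasure (task θ))
    [hsig : ∀ θ, SigmaFinite (task θ)]
    (htaskY : ∀ θ, ∀ᵐ z ∂(task θ), z.2 ∈ Y)
    (htaskR : ∀ θ, ∀ᵐ z ∂(task θ), ‖z.1‖ ≤ R)
    -- the fixed comparator and the step size
    (hhat : Vec d) (hhat0 : hhat ≠ 0)
    (γ : ℝ)
    (hγ : γ = Real.sqrt 2 * ‖hhat‖ / (L * R) *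
      (Real.sqrt ((T : ℝ) * (1 + 4 * (Real.log n + 1) / n)))⁻¹)
    -- Algorithm 1 run with an arbitrary bias `h`
    (W : Vec d → (Fin n → Pt d) → ℕ → Vec d)
    (u' : Vec d → (Fin n → Pt d) → Fin n → ℝ)
    (hu'meas : ∀ h k, Measurable fun S => u' h S k)
    (hW1 : ∀ h S, W h S 1 = h)
    (hsub : ∀ h S (k : Fin n),
      IsSubgradAt (fun a => ℓ a (S k).2) (u' h S k) (⟪(S k).1, W h S (k.1 + 1)⟫_ℝ))
    (hrec : ∀ h S (k : Fin n), W h S (k.1 + 2)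
      = W h S (k.1 + 1) - (((k.1 + 1 : ℕ) : ℝ) * lam)⁻¹ •
          (u' h S k • (S k).1 + lam • (W h S (k.1 + 1) - h)))
    -- the joint distribution of one (task, dataset) observation
    (ν : Measure (Θ × (Fin n → Pt d))) [IsProbabilityMeasure ν]
    (hν : ν = ρ.bind fun θ =>
      (Measure.dirac θ).prod (Measure.pi fun _ : Fin n => task θ))
    -- Algorithm 2: meta-SGD with approximate meta-gradients
    (H : (Fin T → Θ × (Fin n → Pt d)) → ℕ → Vec d)
    (hH1 : ∀ ω, H ω 1 = 0)
    (hHrec : ∀ ω (t : Fin T), H ω (t.1 + 2)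
      = H ω (t.1 + 1) - γ •
          ((-lam) • (W (H ω (t.1 + 1)) (ω t).2 (n + 1) - H ω (t.1 + 1))))
    -- integrability of all integrands involved
    (hIntInner : ∀ (h : Vec d) θ, Integrable
      (fun S => ⨅ w : Vec d, regRisk ℓ lam S h w)
      (Measure.pi fun _ : Fin n => task θ))
    (hIntOuter : ∀ h : Vec d, Integrable (fun θ =>
      ∫ S, (⨅ w : Vec d, regRisk ℓ lam S h w)
        ∂(Measure.pi fun _ : Fin n => task θ)) ρ)
    (hIntMeta : Integrable (fun ω =>
      ∫ θ, (∫ S, (⨅ w : Vec d,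
          regRisk ℓ lam S ((T : ℝ)⁻¹ • ∑ t : Fin T, H ω (t.1 + 1)) w)
        ∂(Measure.pi fun _ : Fin n => task θ)) ∂ρ)
      (Measure.pi fun _ : Fin T => ν)) :
    (∫ ω, (∫ θ, (∫ S, (⨅ w : Vec d,
          regRisk ℓ lam S ((T : ℝ)⁻¹ • ∑ t : Fin T, H ω (t.1 + 1)) w)
        ∂(Measure.pi fun _ : Fin n => task θ)) ∂ρ)
      ∂(Measure.pi fun _ : Fin T => ν))
      - (∫ θ, (∫ S, (⨅ w : Vec d, regRisk ℓ lam S hhat w)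
          ∂(Measure.pi fun _ : Fin n => task θ)) ∂ρ)
      ≤ ‖hhat‖ * (L * R) * Real.sqrt (2 * (1 + 4 * (Real.log n + 1) / n) / T)
        + 2 * R ^ 2 * L ^ 2 * (Real.log n + 1) / (lam * n) := by
  have hT0 : (0 : ℝ) < T := by exact_mod_cast hT
  have hn0 : (0 : ℝ) < n := by exact_mod_cast hn
  have hlog : 0 ≤ Real.log n := Real.log_natCast_nonneg n
  have hnorm : 0 < ‖hhat‖ := norm_pos_iff.2 hhat0
  set c : ℝ := 1 + 4 * (Real.log n + 1) / n
  have hc1 : 1 ≤ c := le_add_of_nonneg_right (by positivity)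
  have hc0 : 0 < c := by linarith
  have hγ0 : 0 < γ := by rw [hγ]; positivity
  set ε : ℝ := 2 * R ^ 2 * L ^ 2 * (Real.log n + 1) / (lam * n)
  obtain ⟨u, hum, hu⟩ := exists_measurable_isSubgradAt hd hn hu'meas hW1 hsub
  have hgood : ∀ θ, ∀ᵐ p ∂(task θ), IsGoodPt (fun a y => ℓ a y - ℓ 0 y) L R p := fun θ => by
    filter_upwards [htaskY θ, htaskR θ] with p hpY hpR
    exact ⟨hpR, sub_self _, fun a b => by simpa using hℓlip p.2 hpY a b⟩
  change ν = ρ.bind (obsKernel n task) at hν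
  subst hν
  have hconv := convexOn_integral_metaObjective (ρ := ρ) hn hR hL hlam
    (fun y => convexOn_of_isSubgradAt fun a => hu a y) hgood hIntInner hIntOuter
  set E : Vec d → ℝ := fun h => ∫ θ, (∫ S, (⨅ z, regRisk ℓ lam S h z)
    ∂(Measure.pi fun _ : Fin n => task θ)) ∂ρ
  change (∫ ω, E ((T : ℝ)⁻¹ • ∑ t : Fin T, H ω (t.1 + 1))
    ∂(Measure.pi fun _ : Fin T => ρ.bind (obsKernel n task))) - E hhat ≤ _
  change Integrable (fun ω => E ((T : ℝ)⁻¹ • ∑ t : Fin T, H ω (t.1 + 1))) _ at hIntMeta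
  have hgm : ∀ v, Measurable fun x : Θ × (Fin n → Pt d) => (-lam) • (W v x.2 (n + 1) - v) :=
    fun v => by
      have hw : Measurable fun S => W v S (n + 1) :=
        measurable_sgd (hu'meas v) (hW1 v) (hrec v) le_rfl
      exact ((hw.comp measurable_snd).sub_const v).const_smul (-lam)
  have hbound : ∀ v, ∀ᵐ x ∂(ρ.bind (obsKernel n task)),
      ‖(-lam) • (W v x.2 (n + 1) - v)‖ ≤ L * R := fun v =>
    ae_bind_of_forall_ae aemeasurable_of_isProbabilityMeasure_bind
      (measurableSet_le (hgm v).norm measurable_const)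
      (ae_norm_sgd_output_le hn hlam hgood (hsub v) (hrec v))
  have hstep := fun v => integrable_and_integral_norm_step_le (hgm v) hγ0 (hbound v) v hhat
  have hgrad := fun v => integral_metaObjective_sub_le_environment (ρ := ρ) hn hR hL hlam hum hu
    hgood hIntInner hIntOuter (hu'meas v) (hW1 v) (hsub v) (hrec v) hhat
  have hjensen : ∀ ω, T * (E ((T : ℝ)⁻¹ • ∑ t : Fin T, H ω (t.1 + 1)) - E hhat)
      ≤ ∑ t : Fin T, (E (H ω (t.1 + 1)) - E hhat) := fun ω => by
    have := hconv.map_sum_le (t := Finset.univ) (w := fun _ : Fin T => (T : ℝ)⁻¹)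
      (p := fun t => H ω (t.1 + 1)) (fun _ _ => by positivity)
      (by simp [hT0.ne']) (fun _ _ => Set.mem_univ _)
    rw [← Finset.smul_sum, ← Finset.smul_sum, smul_eq_mul, ← div_eq_inv_mul,
      le_div_iff₀ hT0] at this
    rw [Finset.sum_sub_distrib]
    simp only [Finset.sum_const, Finset.card_univ, Fintype.card_fin, nsmul_eq_mul]
    linarith
  have key := integral_le_of_potential (ν := ρ.bind (obsKernel n task))
    (fun v x => v - γ • ((-lam) • (W v x.2 (n + 1) - v))) (fun v => E v - E hhat)
    (fun v => ‖v - hhat‖ ^ 2 / (2 * γ)) (γ * (L * R) ^ 2 / 2 + ε) (fun v => by positivity)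
    (fun v => (hstep v).1) (fun v => by linarith [(hstep v).2, hgrad v]) T 0
    (fun ω t => H ω (t + 1)) hH1 hHrec
    (fun ω => T * (E ((T : ℝ)⁻¹ • ∑ t : Fin T, H ω (t.1 + 1)) - E hhat))
    ((hIntMeta.sub (integrable_const _)).const_mul _) (ae_of_all _ hjensen)
  rw [integral_const_mul, integral_sub hIntMeta (integrable_const _)] at key
  simp only [integral_const, probReal_univ, one_smul, zero_sub, norm_neg] at key
  have hreg := regret_stepSize_le hT hnorm (mul_pos hL hR) hc1 hγ
  refine le_of_mul_le_mul_left ?_ hT0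
  linarith
end
end

section
/- (Excess transfer risk for a fixed bias, ERM algorithm.) Under bounded inputs and Lipschitz loss, let h ∈ ℝ^d be fixed with Var_h > 0 and R, L > 0, and let w_h be the biased ERM algorithm run with regularization parameter λ = (R L / Var_h) · n^{−1/2}. Then E_n(w_h) − E_ρ ≤ 2 R L · Var_h · n^{−1/2}. -/
open MeasureTheory Real
open scoped InnerProductSpace

noncomputable section

/-- A minimizer of a convex function plus `c‖· - h‖²` satisfies quadratic growth with constant `c`. -/
theorem add_sq_dist_le_of_isMin {E : Type*} [NormedAddCommGroup E] [InnerProductSpace ℝ E]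
    {f : E → ℝ} (hf : ConvexOn ℝ Set.univ f) {c : ℝ} {h u : E}
    (hu : ∀ w, f u + c * ‖u - h‖ ^ 2 ≤ f w + c * ‖w - h‖ ^ 2) (w : E) :
    f u + c * ‖u - h‖ ^ 2 + c * ‖w - u‖ ^ 2 ≤ f w + c * ‖w - h‖ ^ 2 := by
  have key : ∀ t : ℝ, 0 < t → t ≤ 1 →
      f u + c * ‖u - h‖ ^ 2 + (1 - t) * (c * ‖w - u‖ ^ 2) ≤ f w + c * ‖w - h‖ ^ 2 := by
    intro t ht ht1
    have h1 := hu ((1 - t) • u + t • w)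
    have h2 := hf.2 (Set.mem_univ u) (Set.mem_univ w) (sub_nonneg.2 ht1) ht.le (by ring)
    have h3 : ‖(1 - t) • u + t • w - h‖ ^ 2
        = (1 - t) * ‖u - h‖ ^ 2 + t * ‖w - h‖ ^ 2 - t * (1 - t) * ‖w - u‖ ^ 2 := by
      have e1 : (1 - t) • u + t • w - h = (1 - t) • (u - h) + t • (w - h) := by module
      have e2 : w - u = (w - h) - (u - h) := by abel
      rw [e1, e2, norm_add_sq_real, norm_sub_sq_real (w - h), norm_smul, norm_smul,
        inner_smul_left, inner_smul_right, real_inner_comm (w - h) (u - h), mul_pow, mul_pow,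
        Real.norm_eq_abs, Real.norm_eq_abs, sq_abs, sq_abs]
      simp only [conj_trivial]
      ring
    rw [h3] at h1
    simp only [smul_eq_mul] at h2
    refine le_of_mul_le_mul_left ?_ ht
    nlinarith
  have lim : Filter.Tendsto
      (fun t : ℝ => f u + c * ‖u - h‖ ^ 2 + (1 - t) * (c * ‖w - u‖ ^ 2))
      (nhdsWithin 0 (Set.Ioi 0)) (nhds (f u + c * ‖u - h‖ ^ 2 + (1 - 0) * (c * ‖w - u‖ ^ 2))) := by
    apply Filter.Tendsto.mono_left _ nhdsWithin_le_nhds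
    exact Continuous.tendsto (by fun_prop) 0
  rw [sub_zero, one_mul] at lim
  refine le_of_tendsto lim ?_
  filter_upwards [Ioc_mem_nhdsGT (zero_lt_one' ℝ)] with t ht using key t ht.1 ht.2

/-- Adding a `K`-Lipschitz convex term to a regularized convex objective costs at most
`K² / (2c)` in that term. -/
theorem sub_le_of_isMin_of_isMin_add {E : Type*} [NormedAddCommGroup E] [InnerProductSpace ℝ E]
    {f g : E → ℝ} (hf : ConvexOn ℝ Set.univ f) (hg : ConvexOn ℝ Set.univ g)
    {c K : ℝ} (hc : 0 < c) (hK : ∀ w v, g w - g v ≤ K * ‖w - v‖) {h u v : E}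
    (hu : ∀ w, (f + g) u + c * ‖u - h‖ ^ 2 ≤ (f + g) w + c * ‖w - h‖ ^ 2)
    (hv : ∀ w, f v + c * ‖v - h‖ ^ 2 ≤ f w + c * ‖w - h‖ ^ 2) :
    g v - g u ≤ K ^ 2 / (2 * c) := by
  have h1 := add_sq_dist_le_of_isMin (hf.add hg) hu v
  have h2 := add_sq_dist_le_of_isMin hf hv u
  have h3 := hK v u
  rw [norm_sub_rev u v] at h2
  simp only [Pi.add_apply] at h1
  rw [le_div_iff₀ (by positivity)]
  have h4 : 2 * c * ‖v - u‖ ^ 2 ≤ g v - g u := by linarith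
  nlinarith [sq_nonneg (K - 2 * c * ‖v - u‖)]

/-- A nonnegative continuous function on a finite-dimensional space plus `c‖· - h‖²` with `c > 0`
attains its minimum. -/
theorem exists_isMin_add_sq_dist {E : Type*} [NormedAddCommGroup E] [InnerProductSpace ℝ E]
    [FiniteDimensional ℝ E] {f : E → ℝ} (hf : Continuous f) (hf0 : ∀ w, 0 ≤ f w)
    {c : ℝ} (hc : 0 < c) (h : E) :
    ∃ u, ∀ w, f u + c * ‖u - h‖ ^ 2 ≤ f w + c * ‖w - h‖ ^ 2 := by
  have : ProperSpace E := FiniteDimensional.proper ℝ E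
  refine Continuous.exists_forall_le (by fun_prop) ?_
  have hnorm : Filter.Tendsto (fun w : E => ‖w - h‖) (Filter.cocompact E) Filter.atTop := by
    simpa [dist_eq_norm] using tendsto_dist_right_cocompact_atTop h
  have hsq : Filter.Tendsto (fun w : E => c * ‖w - h‖ ^ 2) (Filter.cocompact E) Filter.atTop :=
    ((Filter.tendsto_pow_atTop two_ne_zero).comp hnorm).const_mul_atTop hc
  exact Filter.tendsto_atTop_mono (fun w => by linarith [hf0 w]) hsq

/-- A function that is a.e. measurable in its second variable and a.e. continuous in the first one
stays a.e. measurable on a product after a measurable substitution in the first variable. -/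
theorem aestronglyMeasurable_prod_of_continuous {α β E : Type*} [MeasurableSpace α]
    [MeasurableSpace β] [TopologicalSpace E] [MeasurableSpace E] [BorelSpace E]
    [TopologicalSpace.PseudoMetrizableSpace E] [SecondCountableTopology E]
    {P : Measure α} {μ : Measure β} [SFinite P] [SFinite μ] {g : E → β → ℝ}
    (hmeas : ∀ w, AEStronglyMeasurable (g w) μ)
    (hcont : ∀ᵐ z ∂μ, Continuous fun w => g w z) {φ : α → E} (hφ : Measurable φ) :
    AEStronglyMeasurable (fun p : α × β => g (φ p.1) p.2) (P.prod μ) := by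
  have hs := hφ.stronglyMeasurable
  refine aestronglyMeasurable_of_tendsto_ae Filter.atTop
    (f := fun k (p : α × β) => g (hs.approx k p.1) p.2) (fun k => ?_) ?_
  · have heq : (fun p : α × β => g (hs.approx k p.1) p.2)
        = ∑ v ∈ (hs.approx k).range,
          ((hs.approx k ⁻¹' {v}) ×ˢ Set.univ).indicator fun p : α × β => g v p.2 := by
      classical
      ext p
      rw [Finset.sum_apply, Finset.sum_eq_single (hs.approx k p.1)]
      · simp
      · intro v _ hv
        simp [Set.indicator, hv.symm]
      · intro hmem
        exact absurd (SimpleFunc.mem_range_self _ _) hmem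
    rw [heq]
    refine Finset.aestronglyMeasurable_sum _ fun v _ => ?_
    exact (hmeas v).comp_snd.indicator (((hs.approx k).measurableSet_fiber v).prod .univ)
  · have : ∀ᵐ p ∂(P.prod μ), Continuous fun w => g w p.2 :=
      Measure.quasiMeasurePreserving_snd.ae hcont
    filter_upwards [this] with p hp
    exact (hp.tendsto _).comp (hs.tendsto_approx p.1)

/-- The loss of a linear predictor on one example, as a function of the weights. -/
def linLoss {d : ℕ} (ℓ : ℝ → ℝ → ℝ) (z : Pt d) (w : Vec d) : ℝ := ℓ (⟪z.1, w⟫_ℝ) z.2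

theorem convexOn_linLoss {d : ℕ} {ℓ : ℝ → ℝ → ℝ} {z : Pt d}
    (hconv : ConvexOn ℝ Set.univ fun a => ℓ a z.2) :
    ConvexOn ℝ Set.univ (linLoss ℓ z) :=
  hconv.comp_linearMap (innerₗ (Vec d) z.1)

theorem linLoss_sub_le {d : ℕ} {ℓ : ℝ → ℝ → ℝ} {z : Pt d} {L R : ℝ} (hL : 0 ≤ L)
    (hlip : ∀ a b, |ℓ a z.2 - ℓ b z.2| ≤ L * |a - b|) (hz : ‖z.1‖ ≤ R) (w v : Vec d) :
    linLoss ℓ z w - linLoss ℓ z v ≤ R * L * ‖w - v‖ :=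
  calc linLoss ℓ z w - linLoss ℓ z v
      ≤ L * |⟪z.1, w⟫_ℝ - ⟪z.1, v⟫_ℝ| := (le_abs_self _).trans (hlip _ _)
    _ = L * |⟪z.1, w - v⟫_ℝ| := by rw [inner_sub_right]
    _ ≤ L * (R * ‖w - v‖) := by
        gcongr
        exact (abs_real_inner_le_norm _ _).trans (by gcongr)
    _ = R * L * ‖w - v‖ := by ring

theorem continuous_linLoss {d : ℕ} {ℓ : ℝ → ℝ → ℝ} {z : Pt d} {L : ℝ}
    (hlip : ∀ a b, |ℓ a z.2 - ℓ b z.2| ≤ L * |a - b|) : Continuous (linLoss ℓ z) := by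
  have h1 : Continuous fun a => ℓ a z.2 := by
    refine (LipschitzWith.of_dist_le_mul (K := L.toNNReal) fun a b => ?_).continuous
    rw [Real.dist_eq, Real.dist_eq]
    refine (hlip a b).trans ?_
    gcongr
    exact Real.le_coe_toNNReal L
  have h2 : Continuous fun w : Vec d => ⟪z.1, w⟫_ℝ := by fun_prop
  exact h1.comp h2

theorem regRisk_eq {d n : ℕ} (ℓ : ℝ → ℝ → ℝ) (lam : ℝ) (S : Fin n → Pt d) (h w : Vec d) :
    regRisk ℓ lam S h w
      = (n : ℝ)⁻¹ * ∑ k, linLoss ℓ (S k) w + lam / 2 * ‖w - h‖ ^ 2 := rfl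

/-- Leave-one-out bound: the total loss of the biased ERMs trained without the `i`-th of `n + 1`
examples, each evaluated on the example it has not seen. -/
theorem sum_linLoss_leaveOneOut_le {d n : ℕ} (hn : 1 ≤ n) {R L lam : ℝ} (hL : 0 ≤ L)
    (hlam : 0 < lam) {ℓ : ℝ → ℝ → ℝ} {T : Fin (n + 1) → Pt d}
    (h0 : ∀ i a, 0 ≤ ℓ a (T i).2)
    (hconv : ∀ i, ConvexOn ℝ Set.univ fun a => ℓ a (T i).2)
    (hlip : ∀ i a b, |ℓ a (T i).2 - ℓ b (T i).2| ≤ L * |a - b|)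
    (hT : ∀ i, ‖(T i).1‖ ≤ R) {h : Vec d} {v : Fin (n + 1) → Vec d}
    (hv : ∀ i w, regRisk ℓ lam (fun k => T (i.succAbove k)) h (v i)
      ≤ regRisk ℓ lam (fun k => T (i.succAbove k)) h w) (w : Vec d) :
    ∑ i, linLoss ℓ (T i) (v i) ≤ ∑ i, linLoss ℓ (T i) w
      + (n : ℝ) * (lam / 2 * ‖w - h‖ ^ 2) + (n + 1) * ((R * L) ^ 2 / (lam * n)) := by
  have hn0 : (0 : ℝ) < n := by exact_mod_cast hn
  obtain ⟨u, hu⟩ := exists_isMin_add_sq_dist (c := lam / 2)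
    (f := fun w => (n : ℝ)⁻¹ * ∑ i, linLoss ℓ (T i) w)
    (continuous_const.mul (continuous_finsetSum _ fun i _ => continuous_linLoss (hlip i)))
    (fun w => mul_nonneg (by positivity) (Finset.sum_nonneg fun i _ => h0 i _))
    (by positivity) h
  have hstab : ∀ i, linLoss ℓ (T i) (v i) ≤ linLoss ℓ (T i) u + (R * L) ^ 2 / (lam * n) := by
    intro i
    have hsplit : ∀ w, (n : ℝ)⁻¹ * ∑ i, linLoss ℓ (T i) w
        = ((fun w => (n : ℝ)⁻¹ * ∑ k, linLoss ℓ (T (i.succAbove k)) w)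
          + fun w => (n : ℝ)⁻¹ * linLoss ℓ (T i) w) w := by
      intro w
      rw [Fin.sum_univ_succAbove _ i, Pi.add_apply]
      ring
    have hcf : ConvexOn ℝ Set.univ
        fun w => (n : ℝ)⁻¹ * ∑ k, linLoss ℓ (T (i.succAbove k)) w := by
      have hsum : ConvexOn ℝ Set.univ fun w => ∑ k, linLoss ℓ (T (i.succAbove k)) w := by
        refine ⟨convex_univ, fun x hx y hy a b ha hb hab => ?_⟩
        rw [smul_eq_mul, smul_eq_mul, Finset.mul_sum, Finset.mul_sum, ← Finset.sum_add_distrib]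
        exact Finset.sum_le_sum fun k _ => (convexOn_linLoss (hconv _)).2 hx hy ha hb hab
      exact hsum.smul (by positivity)
    have hcg : ConvexOn ℝ Set.univ fun w => (n : ℝ)⁻¹ * linLoss ℓ (T i) w :=
      (convexOn_linLoss (hconv i)).smul (by positivity)
    have key := sub_le_of_isMin_of_isMin_add (K := (n : ℝ)⁻¹ * (R * L)) hcf hcg
      (half_pos hlam)
      (fun w v => by
        rw [← mul_sub, mul_assoc]
        exact mul_le_mul_of_nonneg_left (linLoss_sub_le hL (hlip i) (hT i) w v) (by positivity))
      (fun w => by simpa only [hsplit] using hu w)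
      (fun w => by simpa only [regRisk_eq] using hv i w)
    rw [← mul_sub, inv_mul_le_iff₀ hn0] at key
    have : (n : ℝ) * (((n : ℝ)⁻¹ * (R * L)) ^ 2 / (2 * (lam / 2)))
        = (R * L) ^ 2 / (lam * n) := by
      field_simp
    linarith
  have hsum := Finset.sum_le_sum fun i (_ : i ∈ Finset.univ) => hstab i
  rw [Finset.sum_add_distrib, Finset.sum_const, Finset.card_univ, Fintype.card_fin,
    nsmul_eq_mul, Nat.cast_add, Nat.cast_one] at hsum
  have hopt : ∑ i, linLoss ℓ (T i) u
      ≤ ∑ i, linLoss ℓ (T i) w + (n : ℝ) * (lam / 2 * ‖w - h‖ ^ 2) := by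
    have h1 : (n : ℝ)⁻¹ * ∑ i, linLoss ℓ (T i) u
        ≤ (n : ℝ)⁻¹ * ∑ i, linLoss ℓ (T i) w + lam / 2 * ‖w - h‖ ^ 2 :=
      le_trans (le_add_of_nonneg_right (by positivity)) (hu w)
    rwa [inv_mul_le_iff₀ hn0, mul_add, mul_inv_cancel_left₀ hn0.ne'] at h1
  linarith

/-- Expected excess risk of the biased ERM on a single task. -/
theorem integral_trueRisk_erm_le {d n : ℕ} (hn : 1 ≤ n) {R L lam : ℝ} (hL : 0 ≤ L)
    (hlam : 0 < lam) {Y : Set ℝ} {ℓ : ℝ → ℝ → ℝ}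
    (h0 : ∀ a y, y ∈ Y → 0 ≤ ℓ a y)
    (hconv : ∀ y ∈ Y, ConvexOn ℝ Set.univ fun a => ℓ a y)
    (hlip : ∀ y ∈ Y, ∀ a b, |ℓ a y - ℓ b y| ≤ L * |a - b|)
    (μ : Measure (Pt d)) [IsProbabilityMeasure μ]
    (hY : ∀ᵐ z ∂μ, z.2 ∈ Y) (hR : ∀ᵐ z ∂μ, ‖z.1‖ ≤ R)
    (hint : ∀ w, Integrable (fun z : Pt d => linLoss ℓ z w) μ)
    {h : Vec d} {erm : (Fin n → Pt d) → Vec d} (hmeas : Measurable erm)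
    (herm : ∀ S w, regRisk ℓ lam S h (erm S) ≤ regRisk ℓ lam S h w)
    (hrisk : Integrable (fun S => trueRisk ℓ μ (erm S)) (Measure.pi fun _ : Fin n => μ))
    (w : Vec d) :
    ∫ S, trueRisk ℓ μ (erm S) ∂(Measure.pi fun _ : Fin n => μ)
      ≤ trueRisk ℓ μ w + lam / 2 * ‖w - h‖ ^ 2 + (R * L) ^ 2 / (lam * n) := by
  have hprod : Integrable (fun p : (Fin n → Pt d) × Pt d => linLoss ℓ p.2 (erm p.1))
      ((Measure.pi fun _ : Fin n => μ).prod μ) := by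
    rw [integrable_prod_iff]
    · have hnorm : ∀ S, trueRisk ℓ μ (erm S) = ∫ z, ‖linLoss ℓ z (erm S)‖ ∂μ := by
        intro S
        refine integral_congr_ae ?_
        filter_upwards [hY] with z hz
        exact (Real.norm_of_nonneg (h0 _ _ hz)).symm
      refine ⟨Filter.Eventually.of_forall fun S => hint (erm S), ?_⟩
      simpa only [hnorm] using hrisk
    · refine aestronglyMeasurable_prod_of_continuous (g := fun w z => linLoss ℓ z w)
        (fun w => (hint w).aestronglyMeasurable) ?_ hmeas
      filter_upwards [hY] with z hz using continuous_linLoss (hlip _ hz)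
  have hprod_eq : ∫ p : (Fin n → Pt d) × Pt d, linLoss ℓ p.2 (erm p.1)
      ∂((Measure.pi fun _ : Fin n => μ).prod μ)
      = ∫ S, trueRisk ℓ μ (erm S) ∂(Measure.pi fun _ : Fin n => μ) :=
    integral_prod _ hprod
  have hmp : ∀ i : Fin (n + 1), MeasurePreserving
      (fun T : Fin (n + 1) → Pt d => ((fun k => T (i.succAbove k)), T i))
      (Measure.pi fun _ => μ) ((Measure.pi fun _ : Fin n => μ).prod μ) := fun i =>
    Measure.measurePreserving_swap.comp (measurePreserving_piFinSuccAbove (fun _ => μ) i)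
  have heval : ∀ i : Fin (n + 1), MeasurePreserving
      (fun T : Fin (n + 1) → Pt d => T i) (Measure.pi fun _ => μ) μ := fun i =>
    measurePreserving_eval (fun _ => μ) i
  have hintL : ∀ i : Fin (n + 1), Integrable
      (fun T : Fin (n + 1) → Pt d => linLoss ℓ (T i) (erm fun k => T (i.succAbove k)))
      (Measure.pi fun _ => μ) := fun i => (hmp i).integrable_comp_of_integrable hprod
  have hintR : ∀ i : Fin (n + 1), Integrable
      (fun T : Fin (n + 1) → Pt d => linLoss ℓ (T i) w)
      (Measure.pi fun _ => μ) := fun i => (heval i).integrable_comp_of_integrable (hint w)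
  have hL_eq : ∀ i : Fin (n + 1),
      ∫ T : Fin (n + 1) → Pt d, linLoss ℓ (T i) (erm fun k => T (i.succAbove k))
        ∂(Measure.pi fun _ => μ)
      = ∫ S, trueRisk ℓ μ (erm S) ∂(Measure.pi fun _ : Fin n => μ) := by
    intro i
    rw [← hprod_eq, ← (hmp i).map_eq, integral_map (hmp i).aemeasurable]
    rw [(hmp i).map_eq]
    exact hprod.aestronglyMeasurable
  have hR_eq : ∀ i : Fin (n + 1),
      ∫ T : Fin (n + 1) → Pt d, linLoss ℓ (T i) w ∂(Measure.pi fun _ => μ)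
      = trueRisk ℓ μ w := by
    intro i
    have := integral_map (heval i).aemeasurable (f := fun z => linLoss ℓ z w)
      (by rw [(heval i).map_eq]; exact (hint w).aestronglyMeasurable)
    rw [← this, (heval i).map_eq]
    rfl
  have hsumR : Integrable (fun T : Fin (n + 1) → Pt d => ∑ i, linLoss ℓ (T i) w)
      (Measure.pi fun _ => μ) := integrable_finsetSum _ fun i _ => hintR i
  have hae : ∀ᵐ T : Fin (n + 1) → Pt d ∂(Measure.pi fun _ => μ),
      ∑ i, linLoss ℓ (T i) (erm fun k => T (i.succAbove k)) ≤ ∑ i, linLoss ℓ (T i) w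
        + ((n : ℝ) * (lam / 2 * ‖w - h‖ ^ 2) + (n + 1) * ((R * L) ^ 2 / (lam * n))) := by
    have hY' : ∀ᵐ T : Fin (n + 1) → Pt d ∂(Measure.pi fun _ => μ), ∀ i, (T i).2 ∈ Y :=
      ae_all_iff.2 fun i => (heval i).quasiMeasurePreserving.ae hY
    have hR' : ∀ᵐ T : Fin (n + 1) → Pt d ∂(Measure.pi fun _ => μ), ∀ i, ‖(T i).1‖ ≤ R :=
      ae_all_iff.2 fun i => (heval i).quasiMeasurePreserving.ae hR
    filter_upwards [hY', hR'] with T hTY hTR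
    rw [← add_assoc]
    exact sum_linLoss_leaveOneOut_le hn hL hlam (fun i a => h0 _ _ (hTY i))
      (fun i => hconv _ (hTY i)) (fun i => hlip _ (hTY i)) hTR (fun i => herm _) w
  have hmono := integral_mono_ae (integrable_finsetSum _ fun i _ => hintL i)
    (hsumR.add (integrable_const _)) hae
  simp only [Pi.add_apply] at hmono
  rw [integral_finsetSum _ fun i _ => hintL i, integral_add hsumR (integrable_const _),
    integral_finsetSum _ fun i _ => hintR i, integral_const] at hmono
  simp only [hL_eq, hR_eq, Finset.sum_const, Finset.card_univ, Fintype.card_fin, nsmul_eq_mul,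
    probReal_univ, one_smul, Nat.cast_add, Nat.cast_one] at hmono
  have hpos : (0 : ℝ) < n + 1 := by positivity
  refine le_of_mul_le_mul_left ?_ hpos
  have : 0 ≤ lam / 2 * ‖w - h‖ ^ 2 := by positivity
  linarith

/-- Excess transfer risk bound for the biased ERM with a fixed bias `h`:
with `λ = (RL/Var_h)·n^{-1/2}`, the transfer risk of the biased ERM exceeds the oracle risk
by at most `2RL·Var_h·n^{-1/2}`. -/
theorem stmt18
    (d n : ℕ) (hd : 1 ≤ d) (hn : 1 ≤ n)
    (R L : ℝ) (hR : 0 < R) (hL : 0 < L)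
    (Y : Set ℝ) (ℓ : ℝ → ℝ → ℝ)
    (hℓ0 : ∀ a y, y ∈ Y → 0 ≤ ℓ a y)
    (hℓconv : ∀ y ∈ Y, ConvexOn ℝ Set.univ fun a => ℓ a y)
    (hℓlip : ∀ y ∈ Y, ∀ a b, |ℓ a y - ℓ b y| ≤ L * |a - b|)
    -- the environment of tasks
    (Θ : Type*) [MeasurableSpace Θ]
    (ρ : Measure Θ) [IsProbabilityMeasure ρ]
    (task : Θ → Measure (Pt d))
    (htaskprob : ∀ θ, IsProbabilityMeasure (task θ))
    [hsig : ∀ θ, SigmaFinite (task θ)]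
    (htaskY : ∀ θ, ∀ᵐ z ∂(task θ), z.2 ∈ Y)
    (htaskR : ∀ θ, ∀ᵐ z ∂(task θ), ‖z.1‖ ≤ R)
    (hlossInt : ∀ θ w, Integrable (fun z : Pt d => ℓ (⟪z.1, w⟫_ℝ) (z.2)) (task θ))
    -- each task has a minimal-norm minimizer of the true risk
    (wstar : Θ → Vec d)
    (hwmin : ∀ θ w, trueRisk ℓ (task θ) (wstar θ) ≤ trueRisk ℓ (task θ) w)
    (hwnorm : ∀ θ w, trueRisk ℓ (task θ) w = trueRisk ℓ (task θ) (wstar θ) →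
      ‖wstar θ‖ ≤ ‖w‖)
    -- the fixed bias and its variance
    (h : Vec d)
    (Varh : ℝ) (hVarpos : 0 < Varh)
    (hVarInt : Integrable (fun θ => ‖wstar θ - h‖ ^ 2) ρ)
    (hVar : Varh ^ 2 = 1 / 2 * ∫ θ, ‖wstar θ - h‖ ^ 2 ∂ρ)
    -- the regularization parameter
    (lam : ℝ) (hlam : lam = R * L / Varh * (Real.sqrt n)⁻¹)
    -- the biased ERM, assumed measurable in the data
    (erm : (Fin n → Pt d) → Vec d)
    (hermmeas : Measurable erm)
    (herm : ∀ S w, regRisk ℓ lam S h (erm S) ≤ regRisk ℓ lam S h w)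
    -- integrability of the transfer-risk integrands
    (hIntInner : ∀ θ, Integrable (fun S => trueRisk ℓ (task θ) (erm S))
      (Measure.pi fun _ : Fin n => task θ))
    (hIntOuter : Integrable (fun θ =>
      ∫ S, trueRisk ℓ (task θ) (erm S)
        ∂(Measure.pi fun _ : Fin n => task θ)) ρ)
    (hIntOracle : Integrable (fun θ => trueRisk ℓ (task θ) (wstar θ)) ρ) :
    (∫ θ, (∫ S, trueRisk ℓ (task θ) (erm S)
        ∂(Measure.pi fun _ : Fin n => task θ)) ∂ρ)
      - (∫ θ, trueRisk ℓ (task θ) (wstar θ) ∂ρ)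
      ≤ Varh * (2 * R * L) * (Real.sqrt n)⁻¹ := by
  have hn0 : (0 : ℝ) < n := by exact_mod_cast hn
  have hsqrt : 0 < Real.sqrt n := Real.sqrt_pos.2 hn0
  have hlampos : 0 < lam := by rw [hlam]; positivity
  have htask : ∀ θ, ∫ S, trueRisk ℓ (task θ) (erm S) ∂(Measure.pi fun _ : Fin n => task θ)
      ≤ trueRisk ℓ (task θ) (wstar θ)
        + (lam / 2 * ‖wstar θ - h‖ ^ 2 + (R * L) ^ 2 / (lam * n)) := by
    intro θ
    have := htaskprob θ
    rw [← add_assoc]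
    exact integral_trueRisk_erm_le hn hL.le hlampos hℓ0 hℓconv hℓlip (task θ) (htaskY θ)
      (htaskR θ) (hlossInt θ) hermmeas herm (hIntInner θ) (wstar θ)
  have hreg : Integrable
      (fun θ => lam / 2 * ‖wstar θ - h‖ ^ 2 + (R * L) ^ 2 / (lam * n)) ρ :=
    (hVarInt.const_mul _).add (integrable_const _)
  have hmono := integral_mono hIntOuter (hIntOracle.add hreg) htask
  simp only [Pi.add_apply] at hmono
  rw [integral_add hIntOracle hreg, integral_add (hVarInt.const_mul _) (integrable_const _),
    integral_const_mul, integral_const, probReal_univ, one_smul] at hmono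
  have hI : ∫ θ, ‖wstar θ - h‖ ^ 2 ∂ρ = 2 * Varh ^ 2 := by linarith
  have hval : lam / 2 * (2 * Varh ^ 2) + (R * L) ^ 2 / (lam * n)
      = Varh * (2 * R * L) * (Real.sqrt n)⁻¹ := by
    rw [hlam]
    have hs : (n : ℝ) = Real.sqrt n ^ 2 := (Real.sq_sqrt hn0.le).symm
    generalize Real.sqrt n = s at hs hsqrt ⊢
    rw [hs]
    field_simp
    ring
  rw [hI] at hmono
  linarith
end
end
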